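/- Fix positive parameters c, λ, μ, T with μ < 2λ and cT > 1. Then there exists v_◦ > 0 such that for every v ∈ [0, v_◦) the implied volatility smile of the variance-gamma mixture model is W-shaped: for every continuous function σ_v : (0,∞) → (0,∞) satisfying C_v(K) = C_BS(K, σ_v(K)) for all K > 0 (where C_v is the call-price function of f_v, with f_0 the double gamma density in the case v = 0), there exists σ_* > 0 such that (i) there exist points 0 < K_0 < K_1 < K_2 < K_3 < K_4 with σ_v(K_0) > σ_*, σ_v(K_1) < σ_*, σ_v(K_2) > σ_*, σ_v(K_3) < σ_*, σ_v(K_4) > σ_*, and (ii) there do not exist six points 0 < x_0 < x_1 < ... < x_5 such that (σ_v(x_i) − σ_*)·(σ_v(x_{i+1}) − σ_*) < 0 for all i; i.e., K ↦ σ_v(K) − σ_* has exactly four sign changes, with sign sequence (+,−,+,−,+). -/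

import Mathlib

open MeasureTheory

/-- Density of the variance-gamma component `X^+_T`. -/
noncomputable def vgPlus (c lam mu T v x : ℝ) : ℝ :=
  ∫ l in Set.Ioi (0 : ℝ),
    (Real.sqrt (2 * Real.pi * v ^ 2 * l))⁻¹ *
      Real.exp (-(x - (mu - v ^ 2 / 2) * l) ^ 2 / (2 * v ^ 2 * l)) *
      ((lam + mu / 2) ^ (c * T) / Real.Gamma (c * T)) * l ^ (c * T - 1) *
      Real.exp (-(lam + mu / 2) * l)

/-- Density of the variance-gamma component `X^-_T`. -/
noncomputable def vgMinus (c lam mu T v x : ℝ) : ℝ :=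
  ∫ l in Set.Ioi (0 : ℝ),
    (Real.sqrt (2 * Real.pi * v ^ 2 * l))⁻¹ *
      Real.exp (-(x - (-mu - v ^ 2 / 2) * l) ^ 2 / (2 * v ^ 2 * l)) *
      ((lam - mu / 2) ^ (c * T) / Real.Gamma (c * T)) * l ^ (c * T - 1) *
      Real.exp (-(lam - mu / 2) * l)

/-- Mixture weight `a = (1 + μ/(2λ))^{cT}`. -/
noncomputable def mixA (c lam mu T : ℝ) : ℝ := (1 + mu / (2 * lam)) ^ (c * T)

/-- Mixture weight `b = (1 - μ/(2λ))^{cT}`. -/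
noncomputable def mixB (c lam mu T : ℝ) : ℝ := (1 - mu / (2 * lam)) ^ (c * T)

/-- Density of the variance-gamma mixture model (for `v > 0`). -/
noncomputable def vgMix (c lam mu T v x : ℝ) : ℝ :=
  (mixA c lam mu T * vgMinus c lam mu T v x + mixB c lam mu T * vgPlus c lam mu T v x) /
    (mixA c lam mu T + mixB c lam mu T)

/-- `λ₊ = λ/μ + 1/2`. -/
noncomputable def lamPlus (lam mu : ℝ) : ℝ := lam / mu + 1 / 2

/-- `λ₋ = λ/μ - 1/2`. -/
noncomputable def lamMinus (lam mu : ℝ) : ℝ := lam / mu - 1 / 2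

/-- The asymmetric double gamma density (the `v = 0` limit of the mixture model). -/
noncomputable def doubleGamma (c lam mu T x : ℝ) : ℝ :=
  if x < 0 then
    (mixA c lam mu T / (mixA c lam mu T + mixB c lam mu T)) *
      (lamMinus lam mu ^ (c * T) / Real.Gamma (c * T)) * (-x) ^ (c * T - 1) *
      Real.exp (lamMinus lam mu * x)
  else if 0 < x then
    (mixB c lam mu T / (mixA c lam mu T + mixB c lam mu T)) *
      (lamPlus lam mu ^ (c * T) / Real.Gamma (c * T)) * x ^ (c * T - 1) *
      Real.exp (-lamPlus lam mu * x)
  else 0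

/-- Density of the variance-gamma mixture model for `v ≥ 0`, with the double gamma
density as the `v = 0` case. -/
noncomputable def modelDensity (c lam mu T v x : ℝ) : ℝ :=
  if v = 0 then doubleGamma c lam mu T x else vgMix c lam mu T v x

/-- Standard normal cumulative distribution function. -/
noncomputable def stdNormalCDF (x : ℝ) : ℝ :=
  (Real.sqrt (2 * Real.pi))⁻¹ * ∫ t in Set.Iic x, Real.exp (-t ^ 2 / 2)

/-- Black–Scholes call price with `S₀ = 1` and total volatility `σ`. -/
noncomputable def callBS (K σ : ℝ) : ℝ :=
  stdNormalCDF (-Real.log K / σ + σ / 2) - K * stdNormalCDF (-Real.log K / σ - σ / 2)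

/-- Call price associated to a log-price density `f` (with `S₀ = 1`). -/
noncomputable def callPrice (f : ℝ → ℝ) (K : ℝ) : ℝ :=
  ∫ x in Set.Ioi (Real.log K), (Real.exp x - K) * f x


open MeasureTheory Filter Topology

theorem tail_split (g : ℝ → ℝ) (hg : Integrable g) (κ : ℝ) :
    ∫ x in Set.Ioi κ, g x = (∫ x, g x) - ∫ x in Set.Iic κ, g x := by
  have := integral_add_compl (measurableSet_Iic (a := κ)) hg
  rw [Set.compl_Iic] at this
  linarith

theorem tail_top (g : ℝ → ℝ) (hg : Integrable g) :
    Tendsto (fun κ => ∫ x in Set.Ioi κ, g x) atTop (𝓝 0) := by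
  have h : Tendsto (fun κ : ℝ => ∫ x, (Set.Ioi κ).indicator g x) atTop (𝓝 (∫ _x : ℝ, (0:ℝ))) := by
    apply tendsto_integral_filter_of_dominated_convergence (fun x => ‖g x‖)
    · exact Eventually.of_forall fun κ => (hg.indicator measurableSet_Ioi).aestronglyMeasurable
    · exact Eventually.of_forall fun κ => Eventually.of_forall fun x => norm_indicator_le_norm_self _ _
    · exact hg.norm
    · refine Eventually.of_forall fun x => ?_
      apply tendsto_const_nhds.congr'
      filter_upwards [eventually_ge_atTop x] with κ hκ
      rw [Set.indicator_of_notMem]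
      simpa using hκ
  simpa [integral_indicator measurableSet_Ioi] using h

theorem tail_bot (g : ℝ → ℝ) (hg : Integrable g) :
    Tendsto (fun κ => ∫ x in Set.Ioi κ, g x) atBot (𝓝 (∫ x, g x)) := by
  have h : Tendsto (fun κ : ℝ => ∫ x, (Set.Ioi κ).indicator g x) atBot (𝓝 (∫ x : ℝ, g x)) := by
    apply tendsto_integral_filter_of_dominated_convergence (fun x => ‖g x‖)
    · exact Eventually.of_forall fun κ => (hg.indicator measurableSet_Ioi).aestronglyMeasurable
    · exact Eventually.of_forall fun κ => Eventually.of_forall fun x => norm_indicator_le_norm_self _ _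
    · exact hg.norm
    · refine Eventually.of_forall fun x => ?_
      apply tendsto_const_nhds.congr'
      filter_upwards [eventually_lt_atBot x] with κ hκ
      rw [Set.indicator_of_mem]
      simpa using hκ
  simpa [integral_indicator measurableSet_Ioi] using h

theorem iic_hasDeriv (g : ℝ → ℝ) (hg : Integrable g) (hc : Continuous g) (κ : ℝ) :
    HasDerivAt (fun κ => ∫ x in Set.Iic κ, g x) (g κ) κ := by
  have h := intervalIntegral.integral_hasDerivAt_right (hg.intervalIntegrable (a := 0) (b := κ))
    (hc.stronglyMeasurableAtFilter _ _) hc.continuousAt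
  have h2 := h.const_add (∫ x in Set.Iic 0, g x)
  refine h2.congr_of_eventuallyEq (Eventually.of_forall fun y => ?_)
  have := intervalIntegral.integral_Iic_sub_Iic (hg.integrableOn (s := Set.Iic 0))
    (hg.integrableOn (s := Set.Iic y))
  simp only []
  linarith

theorem tail_hasDeriv (g : ℝ → ℝ) (hg : Integrable g) (hc : Continuous g) (κ : ℝ) :
    HasDerivAt (fun κ => ∫ x in Set.Ioi κ, g x) (-g κ) κ := by
  have h2 := (iic_hasDeriv g hg hc κ).const_sub (∫ x, g x)
  refine h2.congr_of_eventuallyEq (Eventually.of_forall fun y => ?_)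
  exact tail_split g hg y

/-- `n` points with alternating signs -/
def Alt (f : ℝ → ℝ) (n : ℕ) : Prop :=
  ∃ x : ℕ → ℝ, ∃ s : ℝ, (∀ i, i + 1 < n → x i < x (i + 1)) ∧ ∀ i, i < n → 0 < s * (-1) ^ i * f (x i)

theorem Alt.congr {f g : ℝ → ℝ} {n : ℕ} (h : Alt f n) (c : ℝ → ℝ) (hc : ∀ x, 0 < c x)
    (hfg : ∀ x, f x = c x * g x) : Alt g n := by
  obtain ⟨x, s, hx, hs⟩ := h
  refine ⟨x, s, hx, fun i hi => ?_⟩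
  have := hs i hi
  rw [hfg] at this
  have h2 : 0 < c (x i) * (s * (-1) ^ i * g (x i)) := by convert this using 1; ring
  exact (pos_iff_pos_of_mul_pos h2).1 (hc _)

theorem slope_pos {F F' : ℝ → ℝ} (hF : ∀ x, HasDerivAt F (F' x) x) {a b t : ℝ} (hab : a < b)
    (h : 0 < t * (F b - F a)) : ∃ c, a < c ∧ c < b ∧ 0 < t * F' c := by
  obtain ⟨c, hc, hc2⟩ := exists_hasDerivAt_eq_slope F F' hab
    (fun x _ => (hF x).continuousAt.continuousWithinAt) (fun x _ => hF x)
  refine ⟨c, hc.1, hc.2, ?_⟩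
  rw [hc2, ← mul_div_assoc]
  exact div_pos h (by linarith)

theorem alt_step {F F' : ℝ → ℝ} (hF : ∀ x, HasDerivAt F (F' x) x)
    (htop : Tendsto F atTop (𝓝 0)) (hbot : Tendsto F atBot (𝓝 0)) {n : ℕ} (h : Alt F (n + 1)) :
    Alt F' (n + 2) := by
  obtain ⟨x, s, hx, hs⟩ := h
  -- far points
  have h0 := hs 0 (by omega)
  have hn := hs n (by omega)
  obtain ⟨a, ha1, ha2⟩ : ∃ a, a < x 0 ∧ s * F a < s * F (x 0) := by
    have h1 : Tendsto (fun y => s * F y) atBot (𝓝 (s * 0)) := hbot.const_mul s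
    rw [mul_zero] at h1
    have h2 : 0 < s * F (x 0) := by simpa using h0
    obtain ⟨a, h3, h4⟩ := ((eventually_lt_atBot (x 0)).and (h1.eventually (gt_mem_nhds h2))).exists
    exact ⟨a, h3, h4⟩
  obtain ⟨b, hb1, hb2⟩ : ∃ b, x n < b ∧ s * (-1) ^ n * F b < s * (-1) ^ n * F (x n) := by
    have h1 : Tendsto (fun y => (s * (-1) ^ n) * F y) atTop (𝓝 ((s * (-1) ^ n) * 0)) :=
      htop.const_mul _
    rw [mul_zero] at h1
    obtain ⟨b, h3, h4⟩ := ((eventually_gt_atTop (x n)).and (h1.eventually (gt_mem_nhds hn))).exists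
    exact ⟨b, h3, h4⟩
  let z : ℕ → ℝ := fun i => if i = 0 then a else if i ≤ n + 1 then x (i - 1) else b
  have hz : ∀ i, i < n + 2 → z i < z (i + 1) ∧ 0 < (s * (-1) ^ i) * (F (z (i + 1)) - F (z i)) := by
    intro i hi
    rcases Nat.eq_zero_or_pos i with rfl | hi0
    · simp only [z]
      simp
      exact ⟨ha1, by linarith⟩
    · obtain ⟨j, rfl⟩ : ∃ j, i = j + 1 := ⟨i - 1, by omega⟩
      by_cases hj : j = n
      · subst hj
        simp only [z]
        simp
        refine ⟨hb1, ?_⟩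
        rw [pow_succ]; linarith
      · have hj' : j < n := by omega
        have e1 : z (j + 1) = x j := by simp [z]; omega
        have e2 : z (j + 1 + 1) = x (j + 1) := by simp [z]; omega
        rw [e1, e2]
        refine ⟨hx j (by omega), ?_⟩
        have p1 := hs j (by omega)
        have p2 := hs (j + 1) (by omega)
        rw [pow_succ] at p2 ⊢
        linarith
  have hy : ∀ i, ∃ y, i < n + 2 → z i < y ∧ y < z (i + 1) ∧ 0 < (s * (-1) ^ i) * F' y := by
    intro i
    by_cases hi : i < n + 2
    · obtain ⟨c, hc⟩ := slope_pos hF (hz i hi).1 (hz i hi).2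
      exact ⟨c, fun _ => hc⟩
    · exact ⟨0, fun h => absurd h hi⟩
  choose y hy using hy
  refine ⟨y, s, fun i hi => ?_, fun i hi => (hy i hi).2.2⟩
  exact (hy i (by omega)).2.1.trans (hy (i + 1) hi).1

/-- iterated tails -/
noncomputable def GG (d : ℝ → ℝ) (κ : ℝ) : ℝ := -∫ x in Set.Ioi κ, Real.exp (-x / 2) * d x

noncomputable def FF (d : ℝ → ℝ) (κ : ℝ) : ℝ :=
  ∫ x in Set.Ioi κ, (Real.exp x - Real.exp κ) * (Real.exp (-x / 2) * d x)


theorem exp_comb (x : ℝ) : Real.exp x * Real.exp (-x / 2) = Real.exp (x / 2) := by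
  rw [← Real.exp_add]; congr 1; ring

theorem FF_eq {d : ℝ → ℝ} (h1 : Integrable fun x => Real.exp (x / 2) * d x)
    (h2 : Integrable fun x => Real.exp (-x / 2) * d x)
    (κ : ℝ) : FF d κ = (∫ x in Set.Ioi κ, Real.exp (x / 2) * d x) + Real.exp κ * GG d κ := by
  unfold FF GG
  rw [mul_neg, ← integral_const_mul, ← sub_eq_add_neg,
    ← integral_sub h1.integrableOn (h2.integrableOn.const_mul _)]
  congr 1
  ext x
  rw [← exp_comb x]; ring

theorem GG_deriv {d : ℝ → ℝ} (hd : Continuous d)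
    (h2 : Integrable fun x => Real.exp (-x / 2) * d x)
    (κ : ℝ) : HasDerivAt (GG d) (Real.exp (-κ / 2) * d κ) κ := by
  have := (tail_hasDeriv _ h2 (by fun_prop) κ).neg
  rw [neg_neg] at this
  exact this

theorem FF_deriv {d : ℝ → ℝ} (hd : Continuous d)
    (h1 : Integrable fun x => Real.exp (x / 2) * d x)
    (h2 : Integrable fun x => Real.exp (-x / 2) * d x)
    (κ : ℝ) : HasDerivAt (FF d) (Real.exp κ * GG d κ) κ := by
  have e : FF d = fun κ => (∫ x in Set.Ioi κ, Real.exp (x / 2) * d x) + Real.exp κ * GG d κ :=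
    funext (FF_eq h1 h2)
  rw [e]
  have := (tail_hasDeriv _ h1 (by fun_prop) κ).add ((Real.hasDerivAt_exp κ).mul (GG_deriv hd h2 κ))
  refine this.congr_deriv ?_
  rw [← exp_comb κ]; ring

theorem GG_top {d : ℝ → ℝ} (h2 : Integrable fun x => Real.exp (-x / 2) * d x)
    : Tendsto (GG d) atTop (𝓝 0) := by
  have := (tail_top _ h2).neg
  rw [neg_zero] at this
  exact this

theorem GG_bot {d : ℝ → ℝ} (h2 : Integrable fun x => Real.exp (-x / 2) * d x)
    (h0 : ∫ x, Real.exp (-x / 2) * d x = 0) : Tendsto (GG d) atBot (𝓝 0) := by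
  have := (tail_bot _ h2).neg
  rw [h0, neg_zero] at this
  exact this

theorem FF_bot {d : ℝ → ℝ} (h1 : Integrable fun x => Real.exp (x / 2) * d x)
    (h2 : Integrable fun x => Real.exp (-x / 2) * d x)
    (h0 : ∫ x, Real.exp (x / 2) * d x = 0) (h0' : ∫ x, Real.exp (-x / 2) * d x = 0) :
    Tendsto (FF d) atBot (𝓝 0) := by
  have e : FF d = fun κ => (∫ x in Set.Ioi κ, Real.exp (x / 2) * d x) + Real.exp κ * GG d κ :=
    funext (FF_eq h1 h2)
  rw [e]
  have := (tail_bot _ h1).add (Real.tendsto_exp_atBot.mul (GG_bot h2 h0'))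
  simpa [h0] using this

theorem FF_top {d : ℝ → ℝ} (h1 : Integrable fun x => Real.exp (x / 2) * d x)
    (h2 : Integrable fun x => Real.exp (-x / 2) * d x)
    : Tendsto (FF d) atTop (𝓝 0) := by
  have e : FF d = fun κ => (∫ x in Set.Ioi κ, Real.exp (x / 2) * d x) + Real.exp κ * GG d κ :=
    funext (FF_eq h1 h2)
  rw [e]
  have hb : Tendsto (fun κ => Real.exp κ * GG d κ) atTop (𝓝 0) := by
    apply squeeze_zero_norm (a := fun κ => ∫ x in Set.Ioi κ, ‖Real.exp (x / 2) * d x‖)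
    · intro κ
      unfold GG
      rw [norm_mul, norm_neg, Real.norm_of_nonneg (Real.exp_pos κ).le]
      calc _ ≤ Real.exp κ * ∫ x in Set.Ioi κ, ‖Real.exp (-x / 2) * d x‖ := by
            gcongr; exact norm_integral_le_integral_norm _
        _ = ∫ x in Set.Ioi κ, Real.exp κ * ‖Real.exp (-x / 2) * d x‖ := by
            rw [integral_const_mul]
        _ ≤ _ := by
            apply setIntegral_mono_on (h2.norm.integrableOn.const_mul _) h1.norm.integrableOn
              measurableSet_Ioi
            intro x hx
            rw [norm_mul, norm_mul, ← mul_assoc, Real.norm_of_nonneg (Real.exp_pos _).le,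
              Real.norm_of_nonneg (Real.exp_pos _).le]
            gcongr
            rw [← exp_comb x]
            gcongr
            exact le_of_lt hx
    · exact tail_top _ h1.norm
  simpa using (tail_top _ h1).add hb

theorem alt_FF {d : ℝ → ℝ} (hd : Continuous d)
    (h1 : Integrable fun x => Real.exp (x / 2) * d x)
    (h2 : Integrable fun x => Real.exp (-x / 2) * d x)
    (h0 : ∫ x, Real.exp (x / 2) * d x = 0) (h0' : ∫ x, Real.exp (-x / 2) * d x = 0)
    (h : Alt (FF d) 6) : Alt d 8 := by
  have a1 := alt_step (FF_deriv hd h1 h2) (FF_top h1 h2) (FF_bot h1 h2 h0 h0') h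
  have a2 : Alt (GG d) 7 := a1.congr Real.exp (fun x => Real.exp_pos x) (fun x => rfl)
  have a3 := alt_step (GG_deriv hd h2) (GG_top h2) (GG_bot h2 h0') a2
  exact a3.congr (fun x => Real.exp (-x / 2)) (fun x => Real.exp_pos _) (fun x => rfl)


open MeasureTheory Filter Topology

noncomputable def phi (t : ℝ) : ℝ := (Real.sqrt (2 * Real.pi))⁻¹ * Real.exp (-t ^ 2 / 2)

theorem sqrt2pi_pos : 0 < Real.sqrt (2 * Real.pi) := by positivity

theorem phi_pos (t : ℝ) : 0 < phi t := by
  unfold phi; have := sqrt2pi_pos; positivity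

theorem phi_cont : Continuous phi := by unfold phi; fun_prop

theorem phi_integrable : Integrable phi := by
  unfold phi
  have := (integrable_exp_neg_mul_sq (b := 1 / 2) (by norm_num)).const_mul (Real.sqrt (2 * Real.pi))⁻¹
  refine this.congr (Eventually.of_forall fun x => ?_)
  simp only []
  congr 2; ring

theorem phi_integral : ∫ t, phi t = 1 := by
  unfold phi
  rw [integral_const_mul]
  have h := integral_gaussian (1 / 2)
  have e : (fun x : ℝ => Real.exp (-x ^ 2 / 2)) = fun x => Real.exp (-(1 / 2) * x ^ 2) := by
    ext x; congr 1; ring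
  rw [e, h]
  have : Real.pi / (1 / 2) = 2 * Real.pi := by ring
  rw [this]
  exact inv_mul_cancel₀ sqrt2pi_pos.ne'

theorem cdf_eq (x : ℝ) : stdNormalCDF x = ∫ t in Set.Iic x, phi t := by
  unfold stdNormalCDF phi
  rw [integral_const_mul]

theorem cdf_deriv (x : ℝ) : HasDerivAt stdNormalCDF (phi x) x := by
  rw [funext cdf_eq]
  exact iic_hasDeriv phi phi_integrable phi_cont x

theorem cdf_split (x : ℝ) : stdNormalCDF x = 1 - ∫ t in Set.Ioi x, phi t := by
  rw [tail_split phi phi_integrable x, phi_integral, cdf_eq]; ring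

theorem cdf_bot : Tendsto stdNormalCDF atBot (𝓝 0) := by
  rw [funext cdf_split]
  have := (tail_bot _ phi_integrable).const_sub 1
  simpa [phi_integral] using this

theorem cdf_top : Tendsto stdNormalCDF atTop (𝓝 1) := by
  rw [funext cdf_split]
  have := (tail_top _ phi_integrable).const_sub 1
  simpa using this

theorem cdf_neg (x : ℝ) : stdNormalCDF (-x) = 1 - stdNormalCDF x := by
  rw [cdf_split x, cdf_eq, ← integral_comp_neg_Ioi]
  have : ∀ t, phi (-t) = phi t := fun t => by unfold phi; simp
  simp [this]

/-- symmetrized Gaussian -/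
noncomputable def nn (σ x : ℝ) : ℝ :=
  (Real.sqrt (2 * Real.pi))⁻¹ * σ⁻¹ * Real.exp (-x ^ 2 / (2 * σ ^ 2) - σ ^ 2 / 8)

theorem nn_pos {σ : ℝ} (hσ : 0 < σ) (x : ℝ) : 0 < nn σ x := by
  unfold nn; have := sqrt2pi_pos; positivity

theorem nn_cont (σ : ℝ) : Continuous (nn σ) := by unfold nn; fun_prop

theorem nn_even (σ x : ℝ) : nn σ (-x) = nn σ x := by unfold nn; simp

theorem nn_phi {σ : ℝ} (hσ : 0 < σ) (s x : ℝ) (hs : s ^ 2 = 1) :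
    Real.exp (s * x / 2) * nn σ x = σ⁻¹ * phi (-x / σ + s * σ / 2) := by
  unfold nn phi
  have : Real.exp (-(-x / σ + s * σ / 2) ^ 2 / 2) =
      Real.exp (s * x / 2) * Real.exp (-x ^ 2 / (2 * σ ^ 2) - σ ^ 2 / 8) := by
    rw [← Real.exp_add]; congr 1
    have : (-x / σ + s * σ / 2) ^ 2 = x ^ 2 / σ ^ 2 - s * x + s ^ 2 * σ ^ 2 / 4 := by
      field_simp; ring
    rw [this, hs]; field_simp; ring
  rw [this]; ring

theorem nn_tail {σ : ℝ} (hσ : 0 < σ) (s : ℝ) (hs : s ^ 2 = 1) (κ : ℝ) :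
    ∫ x in Set.Ioi κ, Real.exp (s * x / 2) * nn σ x = stdNormalCDF (-κ / σ + s * σ / 2) := by
  have hd : ∀ x ∈ Set.Ici κ, HasDerivAt (fun x => -stdNormalCDF (-x / σ + s * σ / 2))
      (Real.exp (s * x / 2) * nn σ x) x := by
    intro x _
    have h1 : HasDerivAt (fun x : ℝ => -x / σ + s * σ / 2) (-1 / σ) x := by
      have := (((hasDerivAt_id x).neg).div_const σ).add_const (s * σ / 2)
      exact this
    have := ((cdf_deriv _).comp x h1).neg
    refine this.congr_deriv ?_
    rw [nn_phi hσ s x hs]; field_simp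
  have ht : Tendsto (fun x => -stdNormalCDF (-x / σ + s * σ / 2)) atTop (𝓝 (-0)) := by
    apply Tendsto.neg
    apply cdf_bot.comp
    apply tendsto_atBot_add_const_right
    apply Tendsto.atBot_div_const hσ
    exact tendsto_neg_atTop_atBot
  rw [integral_Ioi_of_hasDerivAt_of_nonneg' hd (fun x _ => ?_) ht]
  · ring
  · have := nn_pos hσ x; positivity

theorem nn_integrable {σ : ℝ} (hσ : 0 < σ) (s : ℝ) (hs : s ^ 2 = 1) :
    Integrable fun x => Real.exp (s * x / 2) * nn σ x := by
  have h := (((phi_integrable.comp_add_right (s * σ / 2)).comp_neg).comp_div hσ.ne').const_mul σ⁻¹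
  refine h.congr (Eventually.of_forall fun x => ?_)
  simp only []
  rw [nn_phi hσ s x hs]
  congr 2; ring

theorem nn_total {σ : ℝ} (hσ : 0 < σ) (s : ℝ) (hs : s ^ 2 = 1) :
    ∫ x, Real.exp (s * x / 2) * nn σ x = 1 := by
  have h1 := tail_bot _ (nn_integrable hσ s hs)
  simp_rw [nn_tail hσ s hs] at h1
  refine tendsto_nhds_unique h1 ?_
  apply cdf_top.comp
  apply tendsto_atTop_add_const_right
  apply Tendsto.atTop_div_const hσ
  exact tendsto_neg_atBot_atTop

theorem nn_int1 {σ : ℝ} (hσ : 0 < σ) : Integrable fun x => Real.exp (x / 2) * nn σ x := by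
  simpa using nn_integrable hσ 1 (by norm_num)
theorem nn_int2 {σ : ℝ} (hσ : 0 < σ) : Integrable fun x => Real.exp (-x / 2) * nn σ x := by
  simpa using nn_integrable hσ (-1) (by norm_num)
theorem nn_tot1 {σ : ℝ} (hσ : 0 < σ) : ∫ x, Real.exp (x / 2) * nn σ x = 1 := by
  simpa using nn_total hσ 1 (by norm_num)
theorem nn_tot2 {σ : ℝ} (hσ : 0 < σ) : ∫ x, Real.exp (-x / 2) * nn σ x = 1 := by
  simpa using nn_total hσ (-1) (by norm_num)

theorem callBS_eq {K σ : ℝ} (hK : 0 < K) (hσ : 0 < σ) : callBS K σ = FF (nn σ) (Real.log K) := by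
  rw [FF_eq (nn_int1 hσ) (nn_int2 hσ), GG, Real.exp_log hK]
  have h1 := nn_tail hσ 1 (by norm_num) (Real.log K)
  have h2 := nn_tail hσ (-1) (by norm_num) (Real.log K)
  simp only [one_mul, neg_mul] at h1 h2
  rw [h1, h2, callBS]
  have : -Real.log K / σ + -σ / 2 = -Real.log K / σ - σ / 2 := by ring
  rw [this]; ring

theorem callBS_strictMono {K : ℝ} (hK : 0 < K) : StrictMonoOn (callBS K) (Set.Ioi 0) := by
  have hder : ∀ σ : ℝ, 0 < σ → HasDerivAt (callBS K) (phi (-Real.log K / σ + σ / 2)) σ := by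
    intro σ hσ
    have h0 : HasDerivAt (fun σ : ℝ => -Real.log K / σ) (Real.log K / σ ^ 2) σ := by
      have := (hasDerivAt_inv hσ.ne').const_mul (-Real.log K)
      refine this.congr_deriv ?_
      field_simp
    have hh : HasDerivAt (fun σ : ℝ => σ / 2) (1 / 2) σ := (hasDerivAt_id σ).div_const 2
    have h1 := (cdf_deriv _).comp σ (h0.add hh)
    have h2 := ((cdf_deriv _).comp σ (h0.sub hh)).const_mul K
    refine (h1.sub h2).congr_deriv ?_
    simp only [Pi.add_apply, Pi.sub_apply]
    have key : K * phi (-Real.log K / σ - σ / 2) = phi (-Real.log K / σ + σ / 2) := by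
      unfold phi
      have : K * Real.exp (-(-Real.log K / σ - σ / 2) ^ 2 / 2) =
          Real.exp (-(-Real.log K / σ + σ / 2) ^ 2 / 2) := by
        nth_rewrite 1 [← Real.exp_log hK]
        rw [← Real.exp_add]; congr 1; field_simp; ring
      rw [← this]; ring
    linear_combination (-(Real.log K / σ ^ 2 - 1 / 2)) * key
  apply strictMonoOn_of_deriv_pos (convex_Ioi 0)
  · exact fun σ hσ => (hder σ hσ).continuousAt.continuousWithinAt
  · intro σ hσ
    rw [interior_Ioi] at hσ
    rw [(hder σ hσ).deriv]
    exact phi_pos _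

theorem phi_le (t : ℝ) : phi t ≤ 1 := by
  unfold phi
  have h1 : 1 ≤ Real.sqrt (2 * Real.pi) := by
    rw [Real.one_le_sqrt]; nlinarith [Real.pi_gt_three]
  have h2 : Real.exp (-t ^ 2 / 2) ≤ 1 := by
    rw [Real.exp_le_one_iff]; nlinarith [sq_nonneg t]
  exact mul_le_one₀ (inv_le_one_of_one_le₀ h1) (Real.exp_pos _).le h2

theorem callBS_one (σ : ℝ) : callBS 1 σ = 1 - 2 * stdNormalCDF (-(σ / 2)) := by
  unfold callBS
  have := cdf_neg (σ / 2)
  simp only [Real.log_one, neg_zero, zero_div, zero_add, zero_sub, one_mul]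
  linarith

theorem callBS_one_le {σ : ℝ} (hσ : 0 < σ) : callBS 1 σ ≤ σ := by
  unfold callBS
  simp only [Real.log_one, neg_zero, zero_div, zero_add, zero_sub, one_mul]
  obtain ⟨c, hc, hc2⟩ := exists_hasDerivAt_eq_slope stdNormalCDF phi (a := -(σ / 2)) (b := σ / 2)
    (by linarith) (fun x _ => (cdf_deriv x).continuousAt.continuousWithinAt)
    (fun x _ => cdf_deriv x)
  have h1 := phi_le c
  rw [hc2, div_le_one (by linarith)] at h1
  linarith

open MeasureTheory Filter Topology

theorem no8_aux {d : ℝ → ℝ} (heven : ∀ x, d (-x) = d x) (h0 : d 0 < 0)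
    (h4 : ∀ a b c e : ℝ, 0 < a → a < b → b < c → c < e → 0 < d a → d b < 0 → 0 < d c → d e < 0 → False)
    (x0 x1 x2 x3 x4 x5 x6 x7 s : ℝ) (l0 : x0 < x1) (l1 : x1 < x2) (l2 : x2 < x3) (l3 : x3 < x4)
    (l4 : x4 < x5) (l5 : x5 < x6) (l6 : x6 < x7)
    (s0 : 0 < s * d x0) (s1 : s * d x1 < 0) (s2 : 0 < s * d x2) (s3 : s * d x3 < 0)
    (s4 : 0 < s * d x4) (s5 : s * d x5 < 0) (s6 : 0 < s * d x6) (s7 : s * d x7 < 0)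
    (hx : 0 ≤ x4) : False := by
  rcases lt_trichotomy s 0 with hs | hs | hs
  · have t0 := neg_of_mul_pos_right s0 hs.le
    have t2 := neg_of_mul_pos_right s2 hs.le
    have t4 := neg_of_mul_pos_right s4 hs.le
    have t6 := neg_of_mul_pos_right s6 hs.le
    have t1 := pos_of_mul_neg_right s1 hs.le
    have t3 := pos_of_mul_neg_right s3 hs.le
    have t5 := pos_of_mul_neg_right s5 hs.le
    have t7 := pos_of_mul_neg_right s7 hs.le
    rcases lt_trichotomy x3 0 with h | h | h
    · exact h4 (-x3) (-x2) (-x1) (-x0) (by linarith) (by linarith) (by linarith) (by linarith)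
        (by rwa [heven]) (by rwa [heven]) (by rwa [heven]) (by rwa [heven])
    · rw [h] at t3; linarith
    · exact h4 x3 x4 x5 x6 h l3 l4 l5 t3 t4 t5 t6
  · rw [hs] at s0; simp at s0
  · have t4 := pos_of_mul_pos_right s4 hs.le
    have t6 := pos_of_mul_pos_right s6 hs.le
    have t5 := neg_of_mul_neg_right s5 hs.le
    have t7 := neg_of_mul_neg_right s7 hs.le
    rcases hx.eq_or_lt with h | h
    · rw [← h] at t4; linarith
    · exact h4 x4 x5 x6 x7 h l4 l5 l6 t4 t5 t6 t7

theorem no_alt8 {d : ℝ → ℝ} (heven : ∀ x, d (-x) = d x) (h0 : d 0 < 0)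
    (h4 : ∀ a b c e : ℝ, 0 < a → a < b → b < c → c < e → 0 < d a → d b < 0 → 0 < d c → d e < 0 → False) :
    ¬ Alt d 8 := by
  rintro ⟨x, s, hx, hs⟩
  have l0 := hx 0 (by norm_num)
  have l1 := hx 1 (by norm_num)
  have l2 := hx 2 (by norm_num)
  have l3 := hx 3 (by norm_num)
  have l4 := hx 4 (by norm_num)
  have l5 := hx 5 (by norm_num)
  have l6 := hx 6 (by norm_num)
  have s0 := hs 0 (by norm_num)
  have s1 := hs 1 (by norm_num)
  have s2 := hs 2 (by norm_num)
  have s3 := hs 3 (by norm_num)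
  have s4 := hs 4 (by norm_num)
  have s5 := hs 5 (by norm_num)
  have s6 := hs 6 (by norm_num)
  have s7 := hs 7 (by norm_num)
  norm_num at l0 l1 l2 l3 l4 l5 l6 s0 s1 s2 s3 s4 s5 s6 s7
  rcases le_or_gt 0 (x 4) with h | h
  · exact no8_aux heven h0 h4 _ _ _ _ _ _ _ _ s l0 l1 l2 l3 l4 l5 l6 s0 s1 s2 s3 s4 s5 s6 s7 h
  · refine no8_aux heven h0 h4 (-x 7) (-x 6) (-x 5) (-x 4) (-x 3) (-x 2) (-x 1) (-x 0) (-s)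
      ?_ ?_ ?_ ?_ ?_ ?_ ?_ ?_ ?_ ?_ ?_ ?_ ?_ ?_ ?_ ?_ <;> (try rw [heven]) <;> linarith

theorem even_half {q : ℝ → ℝ} (hq : Integrable q) (he : ∀ x, q (-x) = q x) :
    ∫ x in Set.Ioi 0, q x = (∫ x, q x) / 2 := by
  have h1 := tail_split q hq 0
  have h2 := integral_comp_neg_Ioi 0 q
  simp only [he, neg_zero] at h2
  linarith

/-- data for the symmetrized density -/
structure SymDens (p : ℝ → ℝ) : Prop where
  cont : Continuous p
  even : ∀ x, p (-x) = p x
  nonneg : ∀ x, 0 ≤ p x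
  int1 : Integrable fun x => Real.exp (x / 2) * p x
  tot1 : ∫ x, Real.exp (x / 2) * p x = 1

theorem SymDens.int2 {p : ℝ → ℝ} (h : SymDens p) : Integrable fun x => Real.exp (-x / 2) * p x := by
  have := h.int1.comp_neg
  simpa [h.even] using this

theorem SymDens.tot2 {p : ℝ → ℝ} (h : SymDens p) : ∫ x, Real.exp (-x / 2) * p x = 1 := by
  have := integral_neg_eq_self (fun x => Real.exp (x / 2) * p x) volume
  simpa [h.even, h.tot1] using this

theorem nn_sym {σ : ℝ} (hσ : 0 < σ) : SymDens (nn σ) :=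
  ⟨nn_cont σ, nn_even σ, fun x => (nn_pos hσ x).le, nn_int1 hσ, nn_tot1 hσ⟩

theorem callPrice_eq {p f : ℝ → ℝ} (hf : ∀ x, f x = Real.exp (-x / 2) * p x) {K : ℝ} (hK : 0 < K) :
    callPrice f K = FF p (Real.log K) := by
  unfold callPrice FF
  simp only [Real.exp_log hK, hf]

theorem FF_sub {p n : ℝ → ℝ} (hp : SymDens p) (hn : SymDens n) (κ : ℝ) :
    FF (fun x => p x - n x) κ = FF p κ - FF n κ := by
  have e1 : (fun x => Real.exp (x / 2) * (p x - n x)) =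
      fun x => Real.exp (x / 2) * p x - Real.exp (x / 2) * n x := by ext x; ring
  have e2 : (fun x => Real.exp (-x / 2) * (p x - n x)) =
      fun x => Real.exp (-x / 2) * p x - Real.exp (-x / 2) * n x := by ext x; ring
  rw [FF_eq hp.int1 hp.int2, FF_eq hn.int1 hn.int2, FF_eq (by rw [e1]; exact hp.int1.sub hn.int1)
    (by rw [e2]; exact hp.int2.sub hn.int2)]
  unfold GG
  rw [e1, e2, integral_sub hp.int1.integrableOn hn.int1.integrableOn,
    integral_sub hp.int2.integrableOn hn.int2.integrableOn]
  ring

/-- properties of a difference of two symmetric densities -/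
structure SymDiff0 (d : ℝ → ℝ) : Prop where
  cont : Continuous d
  even : ∀ x, d (-x) = d x
  int1 : Integrable fun x => Real.exp (x / 2) * d x
  int2 : Integrable fun x => Real.exp (-x / 2) * d x
  tot1 : ∫ x, Real.exp (x / 2) * d x = 0
  tot2 : ∫ x, Real.exp (-x / 2) * d x = 0

theorem symDiff_of {p n : ℝ → ℝ} (hp : SymDens p) (hn : SymDens n) :
    SymDiff0 (fun x => p x - n x) := by
  have e1 : (fun x => Real.exp (x / 2) * (p x - n x)) =
      fun x => Real.exp (x / 2) * p x - Real.exp (x / 2) * n x := by ext x; ring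
  have e2 : (fun x => Real.exp (-x / 2) * (p x - n x)) =
      fun x => Real.exp (-x / 2) * p x - Real.exp (-x / 2) * n x := by ext x; ring
  refine ⟨hp.cont.sub hn.cont, fun x => by rw [hp.even, hn.even], ?_, ?_, ?_, ?_⟩
  · rw [e1]; exact hp.int1.sub hn.int1
  · rw [e2]; exact hp.int2.sub hn.int2
  · rw [e1, integral_sub hp.int1 hn.int1, hp.tot1, hn.tot1]; ring
  · rw [e2, integral_sub hp.int2 hn.int2, hp.tot2, hn.tot2]; ring

theorem GG_zero {d : ℝ → ℝ} (h : SymDiff0 d) (hF : FF d 0 = 0) : GG d 0 = 0 := by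
  rw [FF_eq h.int1 h.int2, Real.exp_zero, one_mul] at hF
  have hi := h.int1.add h.int2
  have := even_half hi (fun x => by simp [h.even]; ring)
  simp only [Pi.add_apply] at this
  rw [integral_add h.int1.integrableOn h.int2.integrableOn, integral_add h.int1 h.int2,
    h.tot1, h.tot2] at this
  unfold GG at hF ⊢
  linarith

theorem FF_near {d : ℝ → ℝ} (h : SymDiff0 d) (hF : FF d 0 = 0) {δ : ℝ} (hδ : 0 < δ)
    (hneg : ∀ x, |x| ≤ δ → d x < 0) : FF d δ < 0 ∧ FF d (-δ) < 0 := by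
  have hG0 := GG_zero h hF
  have hGd := GG_deriv h.cont h.int2
  have hFd := FF_deriv h.cont h.int1 h.int2
  have hG : StrictAntiOn (GG d) (Set.Icc (-δ) δ) := by
    apply strictAntiOn_of_deriv_neg (convex_Icc _ _)
    · exact fun x _ => (hGd x).continuousAt.continuousWithinAt
    · intro x hx
      rw [interior_Icc] at hx
      rw [(hGd x).deriv]
      exact mul_neg_of_pos_of_neg (Real.exp_pos _) (hneg x (abs_le.2 ⟨hx.1.le, hx.2.le⟩))
  constructor
  · have : StrictAntiOn (FF d) (Set.Icc 0 δ) := by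
      apply strictAntiOn_of_deriv_neg (convex_Icc _ _)
      · exact fun x _ => (hFd x).continuousAt.continuousWithinAt
      · intro x hx
        rw [interior_Icc] at hx
        rw [(hFd x).deriv]
        apply mul_neg_of_pos_of_neg (Real.exp_pos _)
        rw [← hG0]
        exact hG ⟨by linarith, hδ.le⟩ ⟨by linarith [hx.1], hx.2.le⟩ hx.1
    have := this ⟨le_rfl, hδ.le⟩ ⟨hδ.le, le_rfl⟩ hδ
    rwa [hF] at this
  · have : StrictMonoOn (FF d) (Set.Icc (-δ) 0) := by
      apply strictMonoOn_of_deriv_pos (convex_Icc _ _)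
      · exact fun x _ => (hFd x).continuousAt.continuousWithinAt
      · intro x hx
        rw [interior_Icc] at hx
        rw [(hFd x).deriv]
        apply mul_pos (Real.exp_pos _)
        rw [← hG0]
        exact hG ⟨by linarith [hx.1], by linarith [hx.2]⟩ ⟨by linarith, hδ.le⟩ hx.2
    have := this ⟨le_rfl, by linarith⟩ ⟨by linarith, le_rfl⟩ (by linarith : -δ < 0)
    rwa [hF] at this

theorem FF_far {d : ℝ → ℝ} (h : SymDiff0 d) {X : ℝ}
    (hpos : ∀ x, X ≤ x → 0 < d x) : (∀ x, X ≤ x → 0 < FF d x) ∧ (∀ x, x ≤ -X → 0 < FF d x) := by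
  have hGd := GG_deriv h.cont h.int2
  have hFd := FF_deriv h.cont h.int1 h.int2
  have hpos' : ∀ x, x ≤ -X → 0 < d x := fun x hx => by
    rw [← h.even]; exact hpos _ (by linarith)
  constructor
  · have hG : StrictMonoOn (GG d) (Set.Ici X) := by
      apply strictMonoOn_of_deriv_pos (convex_Ici _)
      · exact fun x _ => (hGd x).continuousAt.continuousWithinAt
      · intro x hx
        rw [interior_Ici] at hx
        rw [(hGd x).deriv]
        exact mul_pos (Real.exp_pos _) (hpos x (le_of_lt hx))
    have hGn : ∀ x, X ≤ x → GG d x < 0 := by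
      intro x hx
      have h1 : GG d x < GG d (x + 1) := hG hx (by simp; linarith) (by linarith)
      refine h1.trans_le (ge_of_tendsto (GG_top h.int2) ?_)
      filter_upwards [eventually_ge_atTop (x + 1)] with y hy
      exact hG.monotoneOn (by simp; linarith) (by simp; linarith) hy
    have hF : StrictAntiOn (FF d) (Set.Ici X) := by
      apply strictAntiOn_of_deriv_neg (convex_Ici _)
      · exact fun x _ => (hFd x).continuousAt.continuousWithinAt
      · intro x hx
        rw [interior_Ici] at hx
        rw [(hFd x).deriv]
        exact mul_neg_of_pos_of_neg (Real.exp_pos _) (hGn x (le_of_lt hx))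
    intro x hx
    have h1 : FF d (x + 1) < FF d x := hF hx (by simp; linarith) (by linarith)
    refine lt_of_le_of_lt (le_of_tendsto (FF_top h.int1 h.int2) ?_) h1
    filter_upwards [eventually_ge_atTop (x + 1)] with y hy
    exact hF.antitoneOn (by simp; linarith) (by simp; linarith) hy
  · have hG : StrictMonoOn (GG d) (Set.Iic (-X)) := by
      apply strictMonoOn_of_deriv_pos (convex_Iic _)
      · exact fun x _ => (hGd x).continuousAt.continuousWithinAt
      · intro x hx
        rw [interior_Iic] at hx
        rw [(hGd x).deriv]
        exact mul_pos (Real.exp_pos _) (hpos' x (le_of_lt hx))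
    have hGn : ∀ x, x ≤ -X → 0 < GG d x := by
      intro x hx
      have h1 : GG d (x - 1) < GG d x := hG (by simp; linarith) hx (by linarith)
      refine lt_of_le_of_lt (le_of_tendsto (GG_bot h.int2 h.tot2) ?_) h1
      filter_upwards [eventually_le_atBot (x - 1)] with y hy
      exact hG.monotoneOn (by simp; linarith) (by simp; linarith) hy
    have hF : StrictMonoOn (FF d) (Set.Iic (-X)) := by
      apply strictMonoOn_of_deriv_pos (convex_Iic _)
      · exact fun x _ => (hFd x).continuousAt.continuousWithinAt
      · intro x hx
        rw [interior_Iic] at hx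
        rw [(hFd x).deriv]
        exact mul_pos (Real.exp_pos _) (hGn x (le_of_lt hx))
    intro x hx
    have h1 : FF d (x - 1) < FF d x := hF (by simp; linarith) hx (by linarith)
    refine lt_of_le_of_lt (le_of_tendsto (FF_bot h.int1 h.int2 h.tot1 h.tot2) ?_) h1
    filter_upwards [eventually_le_atBot (x - 1)] with y hy
    exact hF.monotoneOn (by simp; linarith) (by simp; linarith) hy

/-- exponential lower bound beats the Gaussian -/
theorem tail_beats {p : ℝ → ℝ} {c0 C : ℝ} (hc0 : 0 < c0)
    (hp : ∀ x, 1 ≤ x → c0 * Real.exp (-C * x) ≤ p x) {σ : ℝ} (hσ : 0 < σ) :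
    ∃ X, ∀ x, X ≤ x → 0 < p x - nn σ x := by
  have h : Tendsto (fun x : ℝ => x * (x / (2 * σ ^ 2) - C) + σ ^ 2 / 8) atTop atTop := by
    apply tendsto_atTop_add_const_right
    apply Tendsto.atTop_mul_atTop₀ tendsto_id
    apply tendsto_atTop_add_const_right
    exact tendsto_id.atTop_div_const (by positivity)
  have h2 := Real.tendsto_exp_atTop.comp h
  obtain ⟨X, hX⟩ := ((h2.eventually_gt_atTop ((Real.sqrt (2 * Real.pi))⁻¹ * σ⁻¹ / c0)).and
    (eventually_ge_atTop 1)).exists_forall_of_atTop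
  refine ⟨X, fun x hx => ?_⟩
  obtain ⟨h3, h4⟩ := hX x hx
  have h5 := hp x h4
  suffices nn σ x < c0 * Real.exp (-C * x) by linarith
  rw [div_lt_iff₀ hc0] at h3
  unfold nn
  have e : Real.exp (-x ^ 2 / (2 * σ ^ 2) - σ ^ 2 / 8) * Real.exp (x * (x / (2 * σ ^ 2) - C) + σ ^ 2 / 8)
      = Real.exp (-C * x) := by
    rw [← Real.exp_add]; congr 1; ring
  rw [← e]
  have h6 := Real.exp_pos (-x ^ 2 / (2 * σ ^ 2) - σ ^ 2 / 8)
  simp only [Function.comp] at h3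
  nlinarith

open MeasureTheory Filter Topology

theorem SymDens.int0 {p : ℝ → ℝ} (h : SymDens p) : Integrable p := by
  refine (h.int1.add h.int2).mono' h.cont.aestronglyMeasurable (Eventually.of_forall fun x => ?_)
  rw [Real.norm_of_nonneg (h.nonneg x)]
  simp only [Pi.add_apply]
  have h1 := h.nonneg x
  have h2 : 1 ≤ Real.exp (x / 2) + Real.exp (-x / 2) := by
    rcases le_total 0 x with hx | hx
    · have := Real.one_le_exp (x := x / 2) (by linarith)
      have := Real.exp_pos (-x / 2)
      linarith
    · have := Real.one_le_exp (x := -x / 2) (by linarith)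
      have := Real.exp_pos (x / 2)
      linarith
  nlinarith

theorem vol_bounds {i1 i2 : ℝ} (h1 : 0 < i1) (h2 : i2 < 1) :
    ∃ m > 0, ∃ M : ℝ, ∀ p f : ℝ → ℝ, SymDens p → (∀ x, f x = Real.exp (-x / 2) * p x) →
      i1 ≤ ∫ x, p x → ∫ x, p x ≤ i2 →
      ∀ σ, 0 < σ → callBS 1 σ = callPrice f 1 → m ≤ σ ∧ σ ≤ M := by
  have ht : Tendsto (fun σ : ℝ => 2 * stdNormalCDF (-(σ / 2))) atTop (𝓝 (2 * 0)) := by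
    apply Tendsto.const_mul
    apply cdf_bot.comp
    apply tendsto_neg_atTop_atBot.comp
    exact tendsto_id.atTop_div_const (by norm_num)
  rw [mul_zero] at ht
  obtain ⟨M, hM⟩ := (ht.eventually (gt_mem_nhds (show 0 < i1 ^ 2 / 2 by positivity))).exists_forall_of_atTop
  refine ⟨1 - i2, by linarith, M, ?_⟩
  intro p f hp hf hi1 hi2 σ hσ hcall
  rw [callPrice_eq hf one_pos, Real.log_one, FF_eq hp.int1 hp.int2, Real.exp_zero, one_mul, GG] at hcall
  have hA := even_half (hp.int1.add hp.int2) (fun x => by simp [hp.even]; ring)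
  simp only [Pi.add_apply] at hA
  rw [integral_add hp.int1.integrableOn hp.int2.integrableOn, integral_add hp.int1 hp.int2,
    hp.tot1, hp.tot2] at hA
  have hB := even_half hp.int0 hp.even
  set E1 := ∫ x in Set.Ioi 0, Real.exp (x / 2) * p x
  set E2 := ∫ x in Set.Ioi 0, Real.exp (-x / 2) * p x with hE2
  set I := ∫ x, p x
  constructor
  · have h3 := callBS_one_le hσ
    have h4 : E2 ≤ ∫ x in Set.Ioi 0, p x := by
      apply setIntegral_mono_on hp.int2.integrableOn hp.int0.integrableOn measurableSet_Ioi
      intro x hx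
      have : Real.exp (-x / 2) ≤ 1 := by
        rw [Real.exp_le_one_iff]; have : (0:ℝ) < x := hx; linarith
      have := hp.nonneg x
      nlinarith
    linarith
  · by_contra hcon
    push Not at hcon
    have h3 := hM σ hcon.le
    rw [callBS_one] at hcall
    have h5 : ∫ x in Set.Ioi 0, I * (p x - I / 4 * (Real.exp (x / 2) * p x + Real.exp (-x / 2) * p x)) ≤ E2 := by
      have hi := ((hp.int0.sub ((hp.int1.add hp.int2).const_mul (I / 4))).const_mul I)
      apply setIntegral_mono_on (f := fun x => I * (p x - I / 4 * (Real.exp (x / 2) * p x + Real.exp (-x / 2) * p x))) hi.integrableOn hp.int2.integrableOn measurableSet_Ioi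
      intro x hx
      have hu : Real.exp (-x / 2) * Real.exp (x / 2) = 1 := by
        rw [← Real.exp_add]; simp [neg_div]
      have hp0 := hp.nonneg x
      have hv := Real.exp_pos (-x / 2)
      set u := Real.exp (x / 2)
      set w := Real.exp (-x / 2)
      have key : I * (1 - I / 4 * (u + w)) ≤ w := by
        have : w - I * (1 - I / 4 * (u + w)) = w * (1 - I * u / 2) ^ 2 + I ^ 2 / 4 * w := by
          linear_combination (I - I ^ 2 * u / 4) * hu
        nlinarith [mul_nonneg hv.le (sq_nonneg (1 - I * u / 2)), mul_nonneg (sq_nonneg I) hv.le]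
      nlinarith
    have h6 : ∫ x in Set.Ioi 0, I * (p x - I / 4 * (Real.exp (x / 2) * p x + Real.exp (-x / 2) * p x)) =
        I * (I / 2 - I / 4 * (E1 + E2)) := by
      have hi : IntegrableOn (fun x => I / 4 * (Real.exp (x / 2) * p x + Real.exp (-x / 2) * p x))
          (Set.Ioi 0) := (hp.int1.add hp.int2).integrableOn.const_mul (I / 4)
      rw [integral_const_mul, integral_sub hp.int0.integrableOn hi, integral_const_mul,
        integral_add hp.int1.integrableOn hp.int2.integrableOn, hB]
    rw [h6, hA] at h5
    nlinarith

theorem core {p f : ℝ → ℝ} (hp : SymDens p) (hf : ∀ x, f x = Real.exp (-x / 2) * p x)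
    {m M : ℝ} (hm : 0 < m)
    (hσ1 : ∀ σ, 0 < σ → callBS 1 σ = callPrice f 1 → m ≤ σ ∧ σ ≤ M)
    {δ : ℝ} (hδ : 0 < δ)
    (hneg : ∀ σ, m / 2 ≤ σ → σ ≤ M → ∀ x, |x| ≤ δ → p x < nn σ x)
    (h5 : ∀ σ, m / 2 ≤ σ → σ ≤ M → ∀ a b c e g : ℝ, 0 < a → a < b → b < c → c < e → e < g →
      nn σ a < p a → p b < nn σ b → nn σ c < p c → p e < nn σ e → nn σ g < p g → False)
    {c0 C : ℝ} (hc0 : 0 < c0) (htail : ∀ x, 1 ≤ x → c0 * Real.exp (-C * x) ≤ p x)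
    (σv : ℝ → ℝ) (hpos : ∀ K, 0 < K → 0 < σv K)
    (hcall : ∀ K, 0 < K → callPrice f K = callBS K (σv K)) :
    ∃ σstar > (0 : ℝ),
          (∃ K0 K1 K2 K3 K4 : ℝ, 0 < K0 ∧ K0 < K1 ∧ K1 < K2 ∧ K2 < K3 ∧ K3 < K4 ∧
            σstar < σv K0 ∧ σv K1 < σstar ∧ σstar < σv K2 ∧ σv K3 < σstar ∧
            σstar < σv K4) ∧
          ¬∃ x : Fin 6 → ℝ, StrictMono x ∧ 0 < x 0 ∧
            ∀ i : Fin 5, (σv (x i.castSucc) - σstar) * (σv (x i.succ) - σstar) < 0 := by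
  have hFF : ∀ σ, 0 < σ → ∀ K, 0 < K →
      FF (fun x => p x - nn σ x) (Real.log K) = callBS K (σv K) - callBS K σ := by
    intro σ hσ K hK
    rw [FF_sub hp (nn_sym hσ), ← callBS_eq hK hσ, ← callPrice_eq hf hK, hcall K hK]
  have hlt : ∀ σ, 0 < σ → ∀ K, 0 < K → (σ < σv K ↔ 0 < FF (fun x => p x - nn σ x) (Real.log K)) := by
    intro σ hσ K hK
    rw [hFF σ hσ K hK, sub_pos]
    exact ((callBS_strictMono hK).lt_iff_lt hσ (hpos K hK)).symm
  have hgt : ∀ σ, 0 < σ → ∀ K, 0 < K → (σv K < σ ↔ FF (fun x => p x - nn σ x) (Real.log K) < 0) := by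
    intro σ hσ K hK
    rw [hFF σ hσ K hK, sub_neg]
    exact ((callBS_strictMono hK).lt_iff_lt (hpos K hK) hσ).symm
  set σ0 := σv 1 with hσ0
  have hσ0p : 0 < σ0 := hpos 1 one_pos
  obtain ⟨hm0, hM0⟩ := hσ1 σ0 hσ0p (hcall 1 one_pos).symm
  have hnear := FF_near (symDiff_of hp (nn_sym hσ0p))
    (by have := hFF σ0 hσ0p 1 one_pos; rw [Real.log_one] at this; rw [this, sub_self]) hδ
    (fun x hx => by have := hneg σ0 (by linarith) hM0 x hx; linarith)
  have hK3 : σv (Real.exp δ) < σ0 := (hgt σ0 hσ0p _ (Real.exp_pos _)).2 (by rw [Real.log_exp]; exact hnear.1)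
  have hK1 : σv (Real.exp (-δ)) < σ0 :=
    (hgt σ0 hσ0p _ (Real.exp_pos _)).2 (by rw [Real.log_exp]; exact hnear.2)
  obtain ⟨σs, hs1, hs2⟩ : ∃ σs, max (max (σv (Real.exp δ)) (σv (Real.exp (-δ)))) (m / 2) < σs ∧ σs < σ0 :=
    exists_between (by simp only [max_lt_iff]; exact ⟨⟨hK3, hK1⟩, by linarith⟩)
  simp only [max_lt_iff] at hs1
  obtain ⟨⟨hs3, hs4⟩, hs5⟩ := hs1
  have hsp : 0 < σs := by linarith
  have hD := symDiff_of hp (nn_sym hsp)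
  obtain ⟨X, hX⟩ := tail_beats hc0 htail hsp
  refine ⟨σs, hsp, ?_, ?_⟩
  · obtain ⟨hfar1, hfar2⟩ := FF_far hD hX
    refine ⟨Real.exp (-(max X (δ + 1))), Real.exp (-δ), 1, Real.exp δ, Real.exp (max X (δ + 1)),
      Real.exp_pos _, ?_, ?_, ?_, ?_, ?_, hs4, hs2, hs3, ?_⟩
    · apply Real.exp_lt_exp.2
      have := le_max_right X (δ + 1)
      linarith
    · rw [Real.exp_lt_one_iff]; linarith
    · rw [Real.one_lt_exp_iff]; exact hδ
    · apply Real.exp_lt_exp.2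
      have := le_max_right X (δ + 1)
      linarith
    · rw [hlt σs hsp _ (Real.exp_pos _), Real.log_exp]
      exact hfar2 _ (by have := le_max_left X (δ + 1); linarith)
    · rw [hlt σs hsp _ (Real.exp_pos _), Real.log_exp]
      exact hfar1 _ (le_max_left _ _)
  · rintro ⟨x, hmono, hx0, halt⟩
    have hxp : ∀ i, 0 < x i := fun i => hx0.trans_le (hmono.monotone (Fin.zero_le i))
    have hA : Alt (FF fun x => p x - nn σs x) 6 := by
      have hsgn : ∀ i, ∀ t : ℝ, 0 < t * (σv (x i) - σs) →
          0 < t * FF (fun x => p x - nn σs x) (Real.log (x i)) := by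
        intro i t ht
        rcases lt_trichotomy t 0 with h | h | h
        · have := neg_of_mul_pos_right ht h.le
          exact mul_pos_of_neg_of_neg h ((hgt σs hsp _ (hxp i)).1 (by linarith))
        · rw [h] at ht; simp at ht
        · have := pos_of_mul_pos_right ht h.le
          exact mul_pos h ((hlt σs hsp _ (hxp i)).1 (by linarith))
      refine ⟨fun i => if h : i < 6 then Real.log (x ⟨i, h⟩) else 0, σv (x 0) - σs, ?_, ?_⟩
      · intro i hi
        beta_reduce
        rw [dif_pos (by omega), dif_pos hi]
        exact Real.log_lt_log (hxp _) (hmono (by simp))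
      · intro i hi
        beta_reduce
        rw [dif_pos hi]
        apply hsgn
        have a0 := halt 0
        have a1 := halt 1
        have a2 := halt 2
        have a3 := halt 3
        have a4 := halt 4
        simp [Fin.succ, Fin.castSucc, Fin.castAdd, Fin.castLE] at a0 a1 a2 a3 a4
        have key : ∀ a b c : ℝ, a * b < 0 → b * c < 0 → 0 < a * c := by
          intro a b c h1 h2
          have h3 : 0 < (a * b) * (b * c) := mul_pos_of_neg_of_neg h1 h2
          have h4 : 0 < (a * c) * b ^ 2 := by nlinarith
          exact pos_of_mul_pos_left h4 (sq_nonneg b)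
        have key2 : ∀ a b c : ℝ, 0 < a * b → b * c < 0 → a * c < 0 := by
          intro a b c h1 h2
          have h3 : (a * b) * (b * c) < 0 := mul_neg_of_pos_of_neg h1 h2
          have h4 : (a * c) * b ^ 2 < 0 := by nlinarith
          exact neg_of_mul_neg_left h4 (sq_nonneg b)
        have b2 := key _ _ _ a0 a1
        have b3 := key2 _ _ _ b2 a2
        have b4 := key _ _ _ b3 a3
        have b5 := key2 _ _ _ b4 a4
        have b0 : 0 < (σv (x 0) - σs) * (σv (x 0) - σs) := by
          apply mul_self_pos.2
          intro h
          rw [h] at b2; simp at b2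
        interval_cases i
        · have h := b0; simp at h ⊢; first | exact h | linarith
        · have h := neg_pos.2 a0; norm_num [neg_pos] at h ⊢; first | exact h | linarith
        · have h := b2; norm_num [neg_pos] at h ⊢; first | exact h | linarith
        · change 0 < (σv (x 0) - σs) * (-1) ^ 3 * (σv (x 3) - σs); linarith
        · have h := b4; norm_num [neg_pos] at h ⊢; first | exact h | linarith
        · change 0 < (σv (x 0) - σs) * (-1) ^ 5 * (σv (x 5) - σs); linarith
    have h8 := alt_FF hD.cont hD.int1 hD.int2 hD.tot1 hD.tot2 hA
    refine no_alt8 hD.even ?_ ?_ h8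
    · have := hneg σs (by linarith) (by linarith) 0 (by simpa using hδ.le)
      linarith
    · intro a b c e ha hab hbc hce da db dc de
      have hg := hX (max X (e + 1)) (le_max_left _ _)
      exact h5 σs (by linarith) (by linarith) a b c e (max X (e + 1)) ha hab hbc hce
        (by have := le_max_right X (e + 1); linarith) (by linarith) (by linarith) (by linarith)
        (by linarith) (by linarith)

open MeasureTheory Filter Topology

theorem int_split {f : ℝ → ℝ} (h1 : IntegrableOn f (Set.Ioi 0))
    (h2 : IntegrableOn (fun x => f (-x)) (Set.Ioi 0)) :
    Integrable f ∧ ∫ x, f x = (∫ x in Set.Ioi 0, f x) + ∫ x in Set.Ioi 0, f (-x) := by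
  have h3 : IntegrableOn f (Set.Iic 0) := by
    have h4 := IntegrableOn.comp_neg_Iic (c := (0 : ℝ)) (f := fun x => f (-x)) (μ := volume)
      (by rw [neg_zero, integrableOn_Ici_iff_integrableOn_Ioi]; exact h2)
    simpa using h4
  have hf : Integrable f := by
    rw [← integrableOn_univ, ← Set.Iic_union_Ioi (a := (0 : ℝ))]
    exact h3.union h1
  refine ⟨hf, ?_⟩
  have h5 := integral_comp_neg_Ioi 0 f
  rw [neg_zero] at h5
  rw [h5, add_comm]
  exact (intervalIntegral.integral_Iic_add_Ioi h3 h1).symm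

theorem gam_int {α r : ℝ} (hα : 0 < α) (hr : 0 < r) :
    IntegrableOn (fun t : ℝ => t ^ (α - 1) * Real.exp (-(r * t))) (Set.Ioi 0) := by
  have := integrableOn_rpow_mul_exp_neg_mul_rpow (p := 1) (s := α - 1) (b := r) (by linarith) one_pos hr
  simpa using this

theorem pat_deriv {h y : ℝ → ℝ} (hd : ∀ x, 0 < x → HasDerivAt h (y x) x) {a b c e g : ℝ}
    (ha : 0 < a) (hab : a < b) (hbc : b < c) (hce : c < e) (heg : e < g)
    (h1 : 0 < h a) (h2 : h b < 0) (h3 : 0 < h c) (h4 : h e < 0) (h5 : 0 < h g) :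
    ∃ x1 x2 x3 x4, a < x1 ∧ x1 < x2 ∧ x2 < x3 ∧ x3 < x4 ∧ y x1 < 0 ∧ 0 < y x2 ∧ y x3 < 0 ∧ 0 < y x4 := by
  have key : ∀ u w t : ℝ, 0 < u → u < w → 0 < t * (h w - h u) → ∃ x, u < x ∧ x < w ∧ 0 < t * y x := by
    intro u w t hu huw ht
    obtain ⟨c, hc, hc2⟩ := exists_hasDerivAt_eq_slope h y huw
      (fun x hx => (hd x (hu.trans_le hx.1)).continuousAt.continuousWithinAt)
      (fun x hx => hd x (hu.trans hx.1))
    refine ⟨c, hc.1, hc.2, ?_⟩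
    rw [hc2, ← mul_div_assoc]
    exact div_pos ht (by linarith)
  obtain ⟨x1, p1, q1, r1⟩ := key a b (-1) ha hab (by linarith)
  obtain ⟨x2, p2, q2, r2⟩ := key b c 1 (by linarith) hbc (by linarith)
  obtain ⟨x3, p3, q3, r3⟩ := key c e (-1) (by linarith) hce (by linarith)
  obtain ⟨x4, p4, q4, r4⟩ := key e g 1 (by linarith) heg (by linarith)
  exact ⟨x1, x2, x3, x4, p1, by linarith, by linarith, by linarith, by linarith, by linarith,
    by linarith, by linarith⟩

theorem log_nn {σ : ℝ} (hσ : 0 < σ) (x : ℝ) :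
    Real.log (nn σ x) = Real.log ((Real.sqrt (2 * Real.pi))⁻¹ * σ⁻¹) + (-x ^ 2 / (2 * σ ^ 2) - σ ^ 2 / 8) := by
  have : 0 < Real.sqrt (2 * Real.pi) := by positivity
  rw [nn, Real.log_mul (by positivity) (Real.exp_pos _).ne', Real.log_exp]

theorem log_nn_deriv {σ : ℝ} (hσ : 0 < σ) (x : ℝ) :
    HasDerivAt (fun x => Real.log (nn σ x)) (-(x / σ ^ 2)) x := by
  simp only [log_nn hσ]
  have h1 : HasDerivAt (fun x : ℝ => -x ^ 2 / (2 * σ ^ 2) - σ ^ 2 / 8) (-(2 * x) / (2 * σ ^ 2)) x := by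
    have := (((hasDerivAt_pow 2 x).neg).div_const (2 * σ ^ 2)).sub_const (σ ^ 2 / 8)
    refine this.congr_deriv ?_
    norm_num
  refine (h1.const_add _).congr_deriv ?_
  field_simp

theorem nn_lower {m M δ σ x : ℝ} (hm : 0 < m) (hσ : m / 2 ≤ σ) (hσM : σ ≤ M) (hx : |x| ≤ δ) (hδ : δ ≤ m) :
    (Real.sqrt (2 * Real.pi))⁻¹ * M⁻¹ * Real.exp (-2 - M ^ 2 / 8) ≤ nn σ x := by
  have hs : 0 < σ := by linarith
  have hM : 0 < M := by linarith
  have h2 : 0 < Real.sqrt (2 * Real.pi) := by positivity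
  rw [nn]
  have h3 : x ^ 2 ≤ m ^ 2 := sq_le_sq' (by linarith [neg_abs_le x]) (by linarith [le_abs_self x])
  have h4 : (m / 2) ^ 2 ≤ σ ^ 2 := by gcongr
  have h5 : x ^ 2 / (2 * σ ^ 2) ≤ 2 := by
    rw [div_le_iff₀ (by positivity)]; nlinarith
  have h6 : σ ^ 2 ≤ M ^ 2 := by gcongr
  gcongr
  rw [neg_div]; linarith

/-- the `v = 0` symmetrised density -/
noncomputable def p0 (N κ β x : ℝ) : ℝ := N * (|x| ^ β * Real.exp (-(κ * |x|)))

theorem p0_exp_int {N κ α θ : ℝ} (hα : 1 < α) (h1 : θ < κ) (h2 : -κ < θ) :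
    Integrable (fun x => Real.exp (θ * x) * p0 N κ (α - 1) x) ∧
    ∫ x, Real.exp (θ * x) * p0 N κ (α - 1) x =
      N * ((1 / (κ - θ)) ^ α + (1 / (κ + θ)) ^ α) * Real.Gamma α := by
  have e1 : Set.EqOn (fun x => N * (x ^ (α - 1) * Real.exp (-((κ - θ) * x))))
      (fun x => Real.exp (θ * x) * p0 N κ (α - 1) x) (Set.Ioi 0) := by
    intro x hx
    have hx : (0 : ℝ) < x := hx
    simp only [p0, abs_of_pos hx]
    rw [show -((κ - θ) * x) = θ * x + -(κ * x) by ring, Real.exp_add]; ring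
  have e2 : Set.EqOn (fun x => N * (x ^ (α - 1) * Real.exp (-((κ + θ) * x))))
      (fun x => Real.exp (θ * -x) * p0 N κ (α - 1) (-x)) (Set.Ioi 0) := by
    intro x hx
    have hx : (0 : ℝ) < x := hx
    simp only [p0, abs_neg, abs_of_pos hx]
    rw [show -((κ + θ) * x) = θ * -x + -(κ * x) by ring, Real.exp_add]; ring
  have i1 := IntegrableOn.congr_fun ((gam_int (α := α) (r := κ - θ) (by linarith) (by linarith)).const_mul N) e1
    measurableSet_Ioi
  have i2 := IntegrableOn.congr_fun ((gam_int (α := α) (r := κ + θ) (by linarith) (by linarith)).const_mul N) e2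
    measurableSet_Ioi
  obtain ⟨h3, h4⟩ := int_split i1 i2
  refine ⟨h3, ?_⟩
  rw [h4, ← setIntegral_congr_fun measurableSet_Ioi e1, ← setIntegral_congr_fun measurableSet_Ioi e2,
    integral_const_mul, integral_const_mul,
    Real.integral_rpow_mul_exp_neg_mul_Ioi (by linarith) (by linarith),
    Real.integral_rpow_mul_exp_neg_mul_Ioi (by linarith) (by linarith)]
  ring

theorem p0_sym {N κ α : ℝ} (hN : 0 ≤ N) (hα : 1 < α) (hκ : 1 / 2 < κ)
    (h : N * ((1 / (κ - 1 / 2)) ^ α + (1 / (κ + 1 / 2)) ^ α) * Real.Gamma α = 1) :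
    SymDens (p0 N κ (α - 1)) := by
  obtain ⟨h1, h2⟩ := p0_exp_int (N := N) hα hκ (show -κ < 1 / 2 by linarith)
  refine ⟨?_, ?_, ?_, ?_, ?_⟩
  · unfold p0
    have : Continuous fun x : ℝ => |x| ^ (α - 1) :=
      (continuous_abs).rpow_const (fun x => Or.inr (by linarith))
    fun_prop
  · intro x; simp [p0]
  · intro x; unfold p0; positivity
  · refine h1.congr (ae_of_all _ fun x => ?_)
    beta_reduce; congr 2; ring
  · refine Eq.trans ?_ (h2.trans h)
    congr 1; ext x; congr 2; ring

theorem p0_h5 {N κ β σ : ℝ} (hN : 0 < N) (hσ : 0 < σ) (a b c e g : ℝ) (ha : 0 < a) (hab : a < b)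
    (hbc : b < c) (hce : c < e) (heg : e < g)
    (h1 : nn σ a < p0 N κ β a) (h2 : p0 N κ β b < nn σ b) (h3 : nn σ c < p0 N κ β c)
    (h4 : p0 N κ β e < nn σ e) (h5 : nn σ g < p0 N κ β g) : False := by
  have hp : ∀ x, 0 < x → 0 < p0 N κ β x := fun x hx => by
    unfold p0; rw [abs_of_pos hx]; have := Real.rpow_pos_of_pos hx β; positivity
  have hd : ∀ x, 0 < x → HasDerivAt
      (fun x => (Real.log N + (β * Real.log x - κ * x)) - Real.log (nn σ x)) (β / x - κ + x / σ ^ 2) x := by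
    intro x hx
    have := ((((Real.hasDerivAt_log hx.ne').const_mul β).sub ((hasDerivAt_id x).const_mul κ)).const_add
      (Real.log N)).sub (log_nn_deriv hσ x)
    refine this.congr_deriv ?_
    field_simp; ring
  have hl : ∀ x, 0 < x → Real.log (p0 N κ β x) = Real.log N + (β * Real.log x - κ * x) := by
    intro x hx
    have := Real.rpow_pos_of_pos hx β
    rw [p0, abs_of_pos hx, Real.log_mul hN.ne' (by positivity), Real.log_mul this.ne' (Real.exp_pos _).ne',
      Real.log_exp, Real.log_rpow hx]
    ring
  have up : ∀ x, 0 < x → nn σ x < p0 N κ β x →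
      0 < (Real.log N + (β * Real.log x - κ * x)) - Real.log (nn σ x) := by
    intro x hx h
    rw [← hl x hx, sub_pos]; exact Real.log_lt_log (nn_pos hσ x) h
  have dn : ∀ x, 0 < x → p0 N κ β x < nn σ x →
      (Real.log N + (β * Real.log x - κ * x)) - Real.log (nn σ x) < 0 := by
    intro x hx h
    rw [← hl x hx, sub_neg]; exact Real.log_lt_log (hp x hx) h
  obtain ⟨x1, x2, x3, x4, k1, k2, k3, k4, y1, y2, y3, y4⟩ := pat_deriv hd ha hab hbc hce heg
    (up a ha h1) (dn b (by linarith) h2) (up c (by linarith) h3) (dn e (by linarith) h4)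
    (up g (by linarith) h5)
  have fac : ∀ x : ℝ, 0 < x → x * (β / x - κ + x / σ ^ 2) = β - κ * x + (σ ^ 2)⁻¹ * x ^ 2 := by
    intro x hx; field_simp
  have p1 : 0 < x1 := by linarith
  have p2 : 0 < x2 := by linarith
  have p3 : 0 < x3 := by linarith
  have z1 := mul_neg_of_pos_of_neg p1 y1
  have z2 := mul_pos p2 y2
  have z3 := mul_neg_of_pos_of_neg p3 y3
  rw [fac _ p1] at z1
  rw [fac _ p2] at z2
  rw [fac _ p3] at z3
  have hs : 0 < (σ ^ 2)⁻¹ := by positivity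
  have w1 := mul_neg_of_neg_of_pos z1 (sub_pos.2 k3)
  have w3 := mul_neg_of_neg_of_pos z3 (sub_pos.2 k2)
  have w2 := mul_pos z2 (sub_pos.2 (k2.trans k3))
  have w4 := mul_pos (mul_pos (mul_pos hs (sub_pos.2 k2)) (sub_pos.2 k3)) (sub_pos.2 (k2.trans k3))
  nlinarith

theorem p0_tail {N κ β : ℝ} (hN : 0 < N) (hβ : 0 < β) (x : ℝ) (hx : 1 ≤ x) :
    N * Real.exp (-κ * x) ≤ p0 N κ β x := by
  rw [p0, abs_of_pos (by linarith)]
  have := Real.one_le_rpow hx hβ.le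
  rw [show -κ * x = -(κ * x) by ring]
  have h2 := Real.exp_pos (-(κ * x))
  have : Real.exp (-(κ * x)) ≤ x ^ β * Real.exp (-(κ * x)) := by nlinarith
  nlinarith

theorem p0_small {N κ β : ℝ} (hβ : 0 < β) {ε : ℝ} (hε : 0 < ε) :
    ∃ δ > 0, ∀ x, |x| ≤ δ → p0 N κ β x < ε := by
  have hc : Continuous (p0 N κ β) := by
    unfold p0
    have : Continuous fun x : ℝ => |x| ^ β :=
      (continuous_abs).rpow_const (fun x => Or.inr hβ.le)
    fun_prop
  have h0 : p0 N κ β 0 = 0 := by simp [p0, Real.zero_rpow hβ.ne']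
  have := Metric.continuousAt_iff.1 (hc.continuousAt (x := 0)) ε hε
  obtain ⟨δ, hδ, h⟩ := this
  refine ⟨δ / 2, by positivity, fun x hx => ?_⟩
  have := h (x := x) (by simpa [Real.dist_eq] using lt_of_le_of_lt hx (by linarith))
  rw [h0, Real.dist_eq, sub_zero] at this
  exact lt_of_abs_lt this

/-! constants -/
theorem mixA_pos {c lam mu T : ℝ} (hlam : 0 < lam) (hmu : 0 < mu) : 0 < mixA c lam mu T := by
  unfold mixA; positivity

theorem one_sub_pos {lam mu : ℝ} (hlam : 0 < lam) (h : mu < 2 * lam) : 0 < 1 - mu / (2 * lam) := by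
  rw [sub_pos, div_lt_one (by linarith)]; exact h

theorem mixB_pos {c lam mu T : ℝ} (hlam : 0 < lam) (h : mu < 2 * lam) : 0 < mixB c lam mu T := by
  unfold mixB
  exact Real.rpow_pos_of_pos (one_sub_pos hlam h) _

theorem i2_lt {c lam mu T : ℝ} (hlam : 0 < lam) (hmu : 0 < mu) (h : mu < 2 * lam) (hcT : 1 < c * T) :
    2 * (mixA c lam mu T * mixB c lam mu T) / (mixA c lam mu T + mixB c lam mu T) < 1 := by
  have ha := mixA_pos (c := c) (T := T) hlam hmu
  have hb := mixB_pos (c := c) (T := T) hlam h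
  have hab : mixA c lam mu T * mixB c lam mu T < 1 := by
    have h1 := one_sub_pos hlam h
    rw [mixA, mixB, ← Real.mul_rpow (by positivity) h1.le]
    have h2 : 0 < mu / (2 * lam) := by positivity
    exact Real.rpow_lt_one (by positivity) (by nlinarith) (by linarith)
  rw [div_lt_one (by positivity)]
  generalize mixA c lam mu T = a at *
  generalize mixB c lam mu T = b at *
  nlinarith [sq_nonneg (a - b), mul_pos ha hb]

theorem lamMinus_rpow {c lam mu T : ℝ} (hlam : 0 < lam) (hmu : 0 < mu) (h : mu < 2 * lam) :
    lamMinus lam mu ^ (c * T) = (lam / mu) ^ (c * T) * mixB c lam mu T := by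
  rw [mixB, ← Real.mul_rpow (by positivity) (one_sub_pos hlam h).le, lamMinus]
  congr 1; field_simp

theorem lamPlus_rpow {c lam mu T : ℝ} (hlam : 0 < lam) (hmu : 0 < mu) :
    lamPlus lam mu ^ (c * T) = (lam / mu) ^ (c * T) * mixA c lam mu T := by
  rw [mixA, ← Real.mul_rpow (by positivity) (by positivity), lamPlus]
  congr 1; field_simp

noncomputable def N0 (c lam mu T : ℝ) : ℝ :=
  (lam / mu) ^ (c * T) * (mixA c lam mu T * mixB c lam mu T) /
    ((mixA c lam mu T + mixB c lam mu T) * Real.Gamma (c * T))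

theorem N0_pos {c lam mu T : ℝ} (hlam : 0 < lam) (hmu : 0 < mu) (h : mu < 2 * lam) (hcT : 1 < c * T) :
    0 < N0 c lam mu T := by
  have ha := mixA_pos (c := c) (T := T) hlam hmu
  have hb := mixB_pos (c := c) (T := T) hlam h
  have := Real.Gamma_pos_of_pos (show 0 < c * T by linarith)
  unfold N0; positivity

theorem dg_eq {c lam mu T : ℝ} (hlam : 0 < lam) (hmu : 0 < mu) (h : mu < 2 * lam) (hcT : 1 < c * T) (x : ℝ) :
    doubleGamma c lam mu T x = Real.exp (-x / 2) * p0 (N0 c lam mu T) (lam / mu) (c * T - 1) x := by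
  have ha := mixA_pos (c := c) (T := T) hlam hmu
  have hb := mixB_pos (c := c) (T := T) hlam h
  have hG := Real.Gamma_pos_of_pos (show 0 < c * T by linarith)
  unfold doubleGamma
  split_ifs with h1 h2
  · rw [lamMinus_rpow hlam hmu h, p0, N0, abs_of_neg h1,
      show lamMinus lam mu * x = -x / 2 + -(lam / mu * -x) by unfold lamMinus; ring, Real.exp_add]
    field_simp
  · rw [lamPlus_rpow hlam hmu, p0, N0, abs_of_pos h2,
      show -lamPlus lam mu * x = -x / 2 + -(lam / mu * x) by unfold lamPlus; ring, Real.exp_add]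
    field_simp
  · have : x = 0 := by linarith
    subst this
    simp [p0, Real.zero_rpow (show c * T - 1 ≠ 0 by linarith)]

theorem kappa_gt {lam mu : ℝ} (hmu : 0 < mu) (h : mu < 2 * lam) : 1 / 2 < lam / mu := by
  rw [lt_div_iff₀ hmu]; linarith

theorem dg_sym {c lam mu T : ℝ} (hlam : 0 < lam) (hmu : 0 < mu) (h : mu < 2 * lam) (hcT : 1 < c * T) :
    SymDens (p0 (N0 c lam mu T) (lam / mu) (c * T - 1)) := by
  refine p0_sym (N0_pos hlam hmu h hcT).le hcT (kappa_gt hmu h) ?_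
  have h1 := lamMinus_rpow (c := c) (T := T) hlam hmu h
  have h2 := lamPlus_rpow (c := c) (T := T) hlam hmu
  have ha := mixA_pos (c := c) (T := T) hlam hmu
  have hb := mixB_pos (c := c) (T := T) hlam h
  have hG := Real.Gamma_pos_of_pos (show 0 < c * T by linarith)
  have hk := kappa_gt hmu h
  unfold lamMinus at h1
  unfold lamPlus at h2
  have hkp := Real.rpow_pos_of_pos (show 0 < lam / mu by linarith) (c * T)
  rw [Real.div_rpow (by norm_num) (by linarith), Real.div_rpow (by norm_num) (by linarith), h1, h2,
    Real.one_rpow, N0]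
  generalize (lam / mu) ^ (c * T) = k at *
  field_simp

theorem dg_I0 {c lam mu T : ℝ} (hlam : 0 < lam) (hmu : 0 < mu) (h : mu < 2 * lam) (hcT : 1 < c * T) :
    ∫ x, p0 (N0 c lam mu T) (lam / mu) (c * T - 1) x =
      2 * (mixA c lam mu T * mixB c lam mu T) / (mixA c lam mu T + mixB c lam mu T) := by
  have hk := kappa_gt hmu h
  have h0 := (p0_exp_int (N := N0 c lam mu T) (κ := lam / mu) (θ := 0) hcT (by linarith) (by linarith)).2
  simp only [zero_mul, Real.exp_zero, one_mul, sub_zero, add_zero] at h0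
  rw [h0]
  have ha := mixA_pos (c := c) (T := T) hlam hmu
  have hb := mixB_pos (c := c) (T := T) hlam h
  have hG := Real.Gamma_pos_of_pos (show 0 < c * T by linarith)
  have hkp := Real.rpow_pos_of_pos (show 0 < lam / mu by linarith) (c * T)
  rw [Real.div_rpow (by norm_num) (by linarith), Real.one_rpow, N0]
  generalize (lam / mu) ^ (c * T) = k at *
  field_simp
  ring

open MeasureTheory Filter Topology

noncomputable def jj (q γ A l : ℝ) : ℝ := l ^ γ * Real.exp (-(A / l) - q * l)

noncomputable def JJ (q γ A : ℝ) : ℝ := ∫ l in Set.Ioi 0, jj q γ A l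

theorem jj_pos {q γ A l : ℝ} (hl : 0 < l) : 0 < jj q γ A l :=
  mul_pos (Real.rpow_pos_of_pos hl γ) (Real.exp_pos _)

theorem jj_meas (q γ A : ℝ) : AEStronglyMeasurable (jj q γ A) (volume.restrict (Set.Ioi 0)) := by
  refine ContinuousOn.aestronglyMeasurable ?_ measurableSet_Ioi
  intro l hl
  have hl : (0 : ℝ) < l := hl
  refine ContinuousAt.continuousWithinAt ?_
  unfold jj
  have h1 : ContinuousAt (fun l : ℝ => l ^ γ) l := Real.continuousAt_rpow_const _ _ (Or.inl hl.ne')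
  have h2 : ContinuousAt (fun l : ℝ => A / l) l := continuousAt_const.div continuousAt_id hl.ne'
  fun_prop

theorem gam_int' {s q : ℝ} (hs : -1 < s) (hq : 0 < q) :
    IntegrableOn (fun l : ℝ => l ^ s * Real.exp (-(q * l))) (Set.Ioi 0) := by
  have := gam_int (α := s + 1) (r := q) (by linarith) hq
  simpa using this

theorem jj_int0 {q γ A : ℝ} (hq : 0 < q) (hγ : -1 < γ) (hA : 0 ≤ A) : IntegrableOn (jj q γ A) (Set.Ioi 0) := by
  refine (gam_int' hγ hq).mono' (jj_meas q γ A) ?_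
  refine (ae_restrict_iff' measurableSet_Ioi).2 (ae_of_all _ fun l hl => ?_)
  have hl : (0 : ℝ) < l := hl
  rw [Real.norm_of_nonneg (jj_pos hl).le, jj]
  have : 0 ≤ A / l := by positivity
  have h3 := Real.rpow_pos_of_pos hl γ
  gcongr
  linarith

theorem jj_le {q γ A : ℝ} (hA : 0 < A) (n : ℕ) {l : ℝ} (hl : 0 < l) :
    jj q γ A l ≤ (n.factorial / A ^ n) * (l ^ (γ + n) * Real.exp (-(q * l))) := by
  have h1 := Real.pow_div_factorial_le_exp (A / l) (by positivity) n
  have hn : (0 : ℝ) < n.factorial := by positivity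
  have h2 : Real.exp (-(A / l)) ≤ n.factorial / A ^ n * l ^ n := by
    rw [Real.exp_neg, inv_le_comm₀ (Real.exp_pos _) (by positivity)]
    refine le_trans (le_of_eq ?_) h1
    rw [div_pow]; field_simp
  rw [jj, Real.rpow_add_natCast hl.ne', show -(A / l) - q * l = -(A / l) + -(q * l) by ring, Real.exp_add]
  have h3 := Real.rpow_pos_of_pos hl γ
  have h4 := Real.exp_pos (-(q * l))
  calc l ^ γ * (Real.exp (-(A / l)) * Real.exp (-(q * l)))
      ≤ l ^ γ * ((n.factorial / A ^ n * l ^ n) * Real.exp (-(q * l))) := by gcongr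
    _ = _ := by ring

theorem jj_int {q A : ℝ} (γ : ℝ) (hq : 0 < q) (hA : 0 < A) : IntegrableOn (jj q γ A) (Set.Ioi 0) := by
  obtain ⟨n, hn⟩ := exists_nat_gt (-1 - γ)
  refine ((gam_int' (s := γ + n) (by linarith) hq).const_mul (n.factorial / A ^ n)).mono' (jj_meas q γ A) ?_
  refine (ae_restrict_iff' measurableSet_Ioi).2 (ae_of_all _ fun l hl => ?_)
  rw [Real.norm_of_nonneg (jj_pos hl).le]
  exact jj_le hA n hl

theorem JJ_pos_of {q γ A : ℝ} (h : IntegrableOn (jj q γ A) (Set.Ioi 0)) : 0 < JJ q γ A := by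
  unfold JJ
  rw [setIntegral_pos_iff_support_of_nonneg_ae _ h]
  · have : Set.Ioi (0 : ℝ) ⊆ Function.support (jj q γ A) ∩ Set.Ioi 0 :=
      fun l hl => ⟨(jj_pos hl).ne', hl⟩
    refine lt_of_lt_of_le ?_ (measure_mono this)
    simp
  · refine (ae_restrict_iff' measurableSet_Ioi).2 (ae_of_all _ fun l hl => (jj_pos hl).le)

theorem jj_hasDeriv_l {q γ A l : ℝ} (hl : 0 < l) :
    HasDerivAt (jj q γ A) (γ * jj q (γ - 1) A l + A * jj q (γ - 2) A l - q * jj q γ A l) l := by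
  have h1 := Real.hasDerivAt_rpow_const (x := l) (p := γ) (Or.inl hl.ne')
  have h2 : HasDerivAt (fun l : ℝ => -(A / l) - q * l) (A / l ^ 2 - q) l := by
    have := (((hasDerivAt_inv hl.ne').const_mul A).neg).sub ((hasDerivAt_id l).const_mul q)
    refine (this.congr_of_eventuallyEq (Eventually.of_forall fun x => ?_)).congr_deriv ?_
    · simp [div_eq_mul_inv]
    · field_simp
  refine (h1.mul h2.exp).congr_deriv ?_
  unfold jj
  have e1 : l ^ γ = l ^ (γ - 2) * l ^ 2 := by
    rw [← Real.rpow_natCast l 2, ← Real.rpow_add hl]; norm_num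
  rw [e1]
  field_simp
  ring

theorem JJ_ibp {q A : ℝ} (γ : ℝ) (hq : 0 < q) (hA : 0 < A) :
    γ * JJ q (γ - 1) A + A * JJ q (γ - 2) A - q * JJ q γ A = 0 := by
  have i0 := jj_int γ hq hA
  have i1 := (jj_int (γ - 1) hq hA).const_mul γ
  have i2 := (jj_int (γ - 2) hq hA).const_mul A
  have i3 := i0.const_mul q
  have i12 : IntegrableOn (fun l => γ * jj q (γ - 1) A l + A * jj q (γ - 2) A l) (Set.Ioi 0) := i1.add i2
  have i4 : IntegrableOn (fun l => γ * jj q (γ - 1) A l + A * jj q (γ - 2) A l - q * jj q γ A l) (Set.Ioi 0) :=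
    i12.sub i3
  have hz : Tendsto (jj q γ A) (𝓝[>] 0) (𝓝 0) := by
    obtain ⟨n, hn⟩ := exists_nat_gt (-γ)
    have hb : Tendsto (fun l : ℝ => (n.factorial / A ^ n) * (l ^ (γ + n) * Real.exp (-(q * l)))) (𝓝[>] 0) (𝓝 0) := by
      have hc : ContinuousAt (fun l : ℝ => (n.factorial / A ^ n) * (l ^ (γ + n) * Real.exp (-(q * l)))) 0 := by
        have : ContinuousAt (fun l : ℝ => l ^ (γ + n)) 0 :=
          Real.continuousAt_rpow_const _ _ (Or.inr (by linarith))
        fun_prop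
      have := hc.tendsto
      rw [Real.zero_rpow (by linarith)] at this
      simp only [zero_mul, mul_zero] at this
      exact this.mono_left nhdsWithin_le_nhds
    refine squeeze_zero' ?_ ?_ hb
    · filter_upwards [self_mem_nhdsWithin] with l hl using (jj_pos hl).le
    · filter_upwards [self_mem_nhdsWithin] with l hl using jj_le hA n hl
  have ht : Tendsto (jj q γ A) atTop (𝓝 0) :=
    tendsto_zero_of_hasDerivAt_of_integrableOn_Ioi (fun l hl => jj_hasDeriv_l hl) i4 i0
  have h := integral_Ioi_deriv_mul_eq_sub (a := (0 : ℝ)) (a' := 0) (b' := 0) (u := fun _ => (1 : ℝ))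
    (u' := fun _ => 0) (v := jj q γ A)
    (v' := fun l => γ * jj q (γ - 1) A l + A * jj q (γ - 2) A l - q * jj q γ A l)
    (fun x _ => hasDerivAt_const x 1) (fun x hx => jj_hasDeriv_l hx)
    (i4.congr_fun (fun l _ => by simp) measurableSet_Ioi)
    (hz.congr fun l => by simp) (ht.congr fun l => by simp)
  simp only [zero_mul, one_mul, zero_add, sub_zero] at h
  rw [integral_sub i12 i3, integral_add i1 i2, integral_const_mul, integral_const_mul, integral_const_mul] at h
  exact h

theorem JJ_hasDeriv {q A : ℝ} (γ : ℝ) (hq : 0 < q) (hA : 0 < A) :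
    HasDerivAt (JJ q γ) (-JJ q (γ - 1) A) A := by
  have hs : Metric.ball A (A / 2) ∈ 𝓝 A := Metric.ball_mem_nhds A (by positivity)
  have hb : ∀ A' ∈ Metric.ball A (A / 2), A / 2 < A' := by
    intro A' h
    rw [Metric.mem_ball, Real.dist_eq, abs_lt] at h
    linarith [h.1]
  have h := hasDerivAt_integral_of_dominated_loc_of_deriv_le (μ := volume.restrict (Set.Ioi 0))
    (F := fun A l => jj q γ A l) (F' := fun A l => -jj q (γ - 1) A l) (x₀ := A)
    (bound := fun l => jj q (γ - 1) (A / 2) l) (s := Metric.ball A (A / 2)) hs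
    (Eventually.of_forall fun A' => jj_meas q γ A') (jj_int γ hq hA) (jj_meas q (γ - 1) A).neg
    ?_ (jj_int (γ - 1) hq (by positivity)) ?_
  · refine h.2.congr_deriv ?_
    rw [integral_neg]; rfl
  · refine (ae_restrict_iff' measurableSet_Ioi).2 (ae_of_all _ fun l hl A' hA' => ?_)
    have hl : (0 : ℝ) < l := hl
    rw [norm_neg, Real.norm_of_nonneg (jj_pos hl).le]
    have := hb A' hA'
    have h3 := Real.rpow_pos_of_pos hl (γ - 1)
    unfold jj
    gcongr
  · refine (ae_restrict_iff' measurableSet_Ioi).2 (ae_of_all _ fun l hl A' hA' => ?_)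
    have hl : (0 : ℝ) < l := hl
    unfold jj
    have h1 : HasDerivAt (fun A : ℝ => -(A / l) - q * l) (-(1 / l)) A' :=
      (((hasDerivAt_id A').div_const l).neg).sub_const _
    refine (h1.exp.const_mul (l ^ γ)).congr_deriv ?_
    rw [Real.rpow_sub_one hl.ne']
    field_simp

theorem JJ_pos {q A : ℝ} (γ : ℝ) (hq : 0 < q) (hA : 0 < A) : 0 < JJ q γ A := JJ_pos_of (jj_int γ hq hA)

/-- log derivative of `x ↦ JJ q γ (w x²)` -/
noncomputable def uu (w q γ x : ℝ) : ℝ := -(2 * w * x) * JJ q (γ - 1) (w * x ^ 2) / JJ q γ (w * x ^ 2)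

theorem JJx_deriv {w q x : ℝ} (γ : ℝ) (hw : 0 < w) (hq : 0 < q) (hx : 0 < x) :
    HasDerivAt (fun x => JJ q γ (w * x ^ 2)) (-(2 * w * x) * JJ q (γ - 1) (w * x ^ 2)) x := by
  have h1 : HasDerivAt (fun x : ℝ => w * x ^ 2) (2 * w * x) x := by
    refine ((hasDerivAt_pow 2 x).const_mul w).congr_deriv ?_
    norm_num; ring
  have h2 := JJ_hasDeriv γ hq (show 0 < w * x ^ 2 by positivity)
  refine (h2.comp x h1).congr_deriv ?_
  ring

theorem logJJ_deriv {w q x : ℝ} (γ : ℝ) (hw : 0 < w) (hq : 0 < q) (hx : 0 < x) :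
    HasDerivAt (fun x => Real.log (JJ q γ (w * x ^ 2))) (uu w q γ x) x := by
  exact (JJx_deriv γ hw hq hx).log (JJ_pos γ hq (by positivity)).ne'

theorem uu_deriv {w q x : ℝ} (γ : ℝ) (hw : 0 < w) (hq : 0 < q) (hx : 0 < x) :
    HasDerivAt (uu w q γ) (4 * w * q + (1 + 2 * γ) * uu w q γ x / x - uu w q γ x ^ 2) x := by
  have hA : 0 < w * x ^ 2 := by positivity
  have h0 := JJx_deriv γ hw hq hx
  have h1 := JJx_deriv (γ - 1) hw hq hx
  have hp := JJ_pos γ hq hA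
  have hi := JJ_ibp γ hq hA
  have h2 : HasDerivAt (fun x : ℝ => -(2 * w * x)) (-(2 * w)) x :=
    (((hasDerivAt_id x).const_mul (2 * w)).neg).congr_deriv (by simp)
  have h3 := (h2.mul h1).div h0 hp.ne'
  refine h3.congr_deriv ?_
  rw [show γ - 1 - 1 = γ - 2 by ring]
  simp only [uu, Pi.mul_apply]
  generalize JJ q γ (w * x ^ 2) = j0 at *
  generalize JJ q (γ - 1) (w * x ^ 2) = j1 at *
  generalize JJ q (γ - 2) (w * x ^ 2) = j2 at *
  have hj : j2 = (q * j0 - γ * j1) / (w * x ^ 2) := by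
    rw [eq_div_iff hA.ne']; linarith
  subst hj
  field_simp
  ring

open MeasureTheory Filter Topology

noncomputable def th (x : ℝ) : ℝ := Real.sinh x / Real.cosh x

theorem th_sq (x : ℝ) : 1 - th x ^ 2 = (Real.cosh x ^ 2)⁻¹ := by
  have h := Real.cosh_pos x
  have := Real.cosh_sq x
  unfold th
  field_simp
  linarith

theorem th_s_pos (x : ℝ) : 0 < 1 - th x ^ 2 := by
  rw [th_sq]; have := Real.cosh_pos x; positivity

theorem th_nonneg {x : ℝ} (hx : 0 ≤ x) : 0 ≤ th x :=
  div_nonneg (Real.sinh_nonneg_iff.2 hx) (Real.cosh_pos x).le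

theorem th_deriv (x : ℝ) : HasDerivAt th (1 - th x ^ 2) x := by
  have h := Real.cosh_pos x
  refine ((Real.hasDerivAt_sinh x).div (Real.hasDerivAt_cosh x) h.ne').congr_deriv ?_
  unfold th
  field_simp

theorem th_s_le (x : ℝ) : 1 - th x ^ 2 ≤ 4 * Real.exp (-x) ^ 2 := by
  rw [th_sq, Real.cosh_eq]
  have h1 := Real.exp_pos x
  have h2 := Real.exp_pos (-x)
  have h3 : Real.exp (-x) * Real.exp x = 1 := by rw [← Real.exp_add]; simp
  rw [inv_le_iff_one_le_mul₀ (by positivity)]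
  have : 1 ≤ Real.exp (-x) * (Real.exp x + Real.exp (-x)) := by nlinarith
  calc (1 : ℝ) ≤ (Real.exp (-x) * (Real.exp x + Real.exp (-x))) ^ 2 := one_le_pow₀ this
    _ = _ := by ring

theorem z0_exists (D E : ℝ) : ∃ z0 > 0, ∀ z, z0 ≤ z → (1 - th z ^ 2) * (D * z ^ 3 + E * z ^ 2) < 4 * th z := by
  have h2 := Real.tendsto_pow_mul_exp_neg_atTop_nhds_zero 2
  have h3 := Real.tendsto_pow_mul_exp_neg_atTop_nhds_zero 3
  have h0 := Real.tendsto_pow_mul_exp_neg_atTop_nhds_zero 0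
  have h4 : Tendsto (fun z : ℝ => |D| * (z ^ 3 * Real.exp (-z)) + |E| * (z ^ 2 * Real.exp (-z))) atTop (𝓝 0) := by
    simpa using (h3.const_mul |D|).add (h2.const_mul |E|)
  have e1 := h4.eventually_lt_const (show (0 : ℝ) < 1 / 2 by norm_num)
  have e2 := h0.eventually_lt_const (show (0 : ℝ) < 1 / 8 by norm_num)
  obtain ⟨z1, hz1⟩ := ((e1.and e2).and (eventually_gt_atTop 0)).exists_forall_of_atTop
  refine ⟨max z1 1, by positivity, fun z hz => ?_⟩
  obtain ⟨⟨a1, a2⟩, a3⟩ := hz1 z (le_trans (le_max_left _ _) hz)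
  have hs := th_s_le z
  have hsp := th_s_pos z
  have ht := th_nonneg a3.le
  simp only [pow_zero, one_mul] at a2
  have he := Real.exp_pos (-z)
  set s := 1 - th z ^ 2 with hsd
  have hs2 : s ≤ Real.exp (-z) / 2 := by nlinarith
  have hs3 : s ≤ 1 / 2 := by linarith
  have ht1 : th z ≤ 1 := by
    by_contra h
    push Not at h
    nlinarith
  have ht2 : 1 / 2 ≤ th z := by nlinarith
  have hP : D * z ^ 3 + E * z ^ 2 ≤ |D| * z ^ 3 + |E| * z ^ 2 := by
    have := le_abs_self D
    have := le_abs_self E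
    gcongr
  have hP0 : 0 ≤ |D| * z ^ 3 + |E| * z ^ 2 := by positivity
  calc s * (D * z ^ 3 + E * z ^ 2) ≤ s * (|D| * z ^ 3 + |E| * z ^ 2) := by gcongr
    _ ≤ Real.exp (-z) / 2 * (|D| * z ^ 3 + |E| * z ^ 2) := by gcongr
    _ < 4 * th z := by nlinarith

theorem zero_up {y y' : ℝ → ℝ} {a b : ℝ} (hab : a < b) (hy : ∀ x, a ≤ x → x ≤ b → HasDerivAt y (y' x) x)
    (ha : y a < 0) (hb : 0 < y b) : ∃ z, a < z ∧ z < b ∧ y z = 0 ∧ 0 ≤ y' z := by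
  have hc : ContinuousOn y (Set.Icc a b) := fun x hx => (hy x hx.1 hx.2).continuousAt.continuousWithinAt
  have hS : IsCompact (Set.Icc a b ∩ y ⁻¹' {0}) :=
    isCompact_Icc.of_isClosed_subset (hc.preimage_isClosed_of_isClosed isClosed_Icc isClosed_singleton)
      Set.inter_subset_left
  have hne : (Set.Icc a b ∩ y ⁻¹' {0}).Nonempty := by
    obtain ⟨z, hz, hz0⟩ := intermediate_value_Icc hab.le hc (show (0 : ℝ) ∈ Set.Icc (y a) (y b) from ⟨ha.le, hb.le⟩)
    exact ⟨z, hz, hz0⟩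
  obtain ⟨z, ⟨hz, hz0⟩, hmax⟩ := hS.exists_isGreatest hne
  have hz0 : y z = 0 := hz0
  have haz : a < z := lt_of_le_of_ne hz.1 (by rintro rfl; linarith)
  have hzb : z < b := lt_of_le_of_ne hz.2 (by rintro rfl; linarith)
  refine ⟨z, haz, hzb, hz0, ?_⟩
  have hpos : ∀ x ∈ Set.Ioo z b, 0 ≤ y x := by
    intro x hx
    by_contra h
    push Not at h
    obtain ⟨t, ht, ht0⟩ := intermediate_value_Icc hx.2.le (hc.mono (Set.Icc_subset_Icc (haz.trans hx.1).le le_rfl))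
      (show (0 : ℝ) ∈ Set.Icc (y x) (y b) from ⟨h.le, hb.le⟩)
    have := hmax (show t ∈ Set.Icc a b ∩ y ⁻¹' {0} from ⟨⟨by linarith [ht.1, hx.1], ht.2⟩, ht0⟩)
    linarith [ht.1, hx.1]
  have hsl := (hasDerivAt_iff_tendsto_slope_left_right.1 (hy z hz.1 hz.2)).2
  refine ge_of_tendsto hsl ?_
  filter_upwards [Ioo_mem_nhdsGT hzb] with x hx
  rw [slope_def_field, hz0, sub_zero]
  exact div_nonneg (hpos x hx) (by linarith [hx.1])

theorem zero_dn {y y' : ℝ → ℝ} {a b : ℝ} (hab : a < b) (hy : ∀ x, a ≤ x → x ≤ b → HasDerivAt y (y' x) x)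
    (ha : 0 < y a) (hb : y b < 0) : ∃ z, a < z ∧ z < b ∧ y z = 0 ∧ y' z ≤ 0 := by
  obtain ⟨z, h1, h2, h3, h4⟩ := zero_up (y := fun x => -y x) (y' := fun x => -y' x) hab
    (fun x hx hx2 => (hy x hx hx2).neg) (by linarith) (by linarith)
  exact ⟨z, h1, h2, by linarith, by linarith⟩

theorem no_conc {R R1 R2 : ℝ → ℝ} {a b c : ℝ} (hab : a < b) (hbc : b < c)
    (h1 : ∀ x, a ≤ x → HasDerivAt R (R1 x) x) (h2 : ∀ x, a ≤ x → HasDerivAt R1 (R2 x) x)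
    (h3 : ∀ x, a ≤ x → R2 x < 0) (ha : 0 ≤ R a) (hb : R b ≤ 0) (hc : 0 ≤ R c) : False := by
  obtain ⟨u, hu, hu2⟩ := exists_hasDerivAt_eq_slope R R1 hab
    (fun x hx => (h1 x hx.1).continuousAt.continuousWithinAt) (fun x hx => h1 x hx.1.le)
  obtain ⟨w, hw, hw2⟩ := exists_hasDerivAt_eq_slope R R1 hbc
    (fun x hx => (h1 x (hab.le.trans hx.1)).continuousAt.continuousWithinAt)
    (fun x hx => h1 x (hab.trans hx.1).le)
  have huw : u < w := hu.2.trans hw.1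
  obtain ⟨t, ht, ht2⟩ := exists_hasDerivAt_eq_slope R1 R2 huw
    (fun x hx => (h2 x (hu.1.le.trans hx.1)).continuousAt.continuousWithinAt)
    (fun x hx => h2 x (hu.1.trans hx.1).le)
  have k1 : R1 u ≤ 0 := by rw [hu2]; exact div_nonpos_of_nonpos_of_nonneg (by linarith) (by linarith)
  have k2 : 0 ≤ R1 w := by rw [hw2]; exact div_nonneg (by linarith) (by linarith)
  have k3 : 0 ≤ R2 t := by rw [ht2]; exact div_nonneg (by linarith) (by linarith)
  have := h3 t (hu.1.trans ht.1).le
  linarith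

/-- symmetrised variance gamma mixture density -/
noncomputable def pv (N k w q γ x : ℝ) : ℝ := N * (Real.cosh (k * x) * JJ q γ (w * x ^ 2))

theorem RR_deriv (k A β S x : ℝ) :
    HasDerivAt (fun x => A * x - 2 * k ^ 2 * x * th (k * x) ^ 2 - 2 * β * k * th (k * x)
      - 2 * k * S * x ^ 2 * th (k * x) - S ^ 2 * x ^ 3)
    (A - 2 * k ^ 2 * th (k * x) ^ 2 - 4 * k ^ 3 * x * th (k * x) * (1 - th (k * x) ^ 2)
      - 2 * β * k ^ 2 * (1 - th (k * x) ^ 2)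
      - 2 * k * S * (k * (1 - th (k * x) ^ 2) * x ^ 2 + 2 * x * th (k * x)) - 3 * S ^ 2 * x ^ 2) x := by
  have ht : HasDerivAt (fun x => th (k * x)) ((1 - th (k * x) ^ 2) * k) x := by
    have hk : HasDerivAt (fun x : ℝ => k * x) k x := by simpa using (hasDerivAt_id x).const_mul k
    exact (th_deriv (k * x)).comp x hk
  have hid := hasDerivAt_id x
  have h1 := hid.const_mul A
  have h2 := (hid.const_mul (2 * k ^ 2)).mul (ht.pow 2)
  have h3 := ht.const_mul (2 * β * k)
  have h4 := ((hasDerivAt_pow 2 x).const_mul (2 * k * S)).mul ht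
  have h5 := (hasDerivAt_pow 3 x).const_mul (S ^ 2)
  refine ((((h1.sub h2).sub h3).sub h4).sub h5).congr_deriv ?_
  simp only [id, Pi.pow_apply]
  push_cast
  ring

theorem RR_deriv2 (k A β S x : ℝ) :
    HasDerivAt (fun x => A - 2 * k ^ 2 * th (k * x) ^ 2 - 4 * k ^ 3 * x * th (k * x) * (1 - th (k * x) ^ 2)
      - 2 * β * k ^ 2 * (1 - th (k * x) ^ 2)
      - 2 * k * S * (k * (1 - th (k * x) ^ 2) * x ^ 2 + 2 * x * th (k * x)) - 3 * S ^ 2 * x ^ 2)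
    (-8 * k ^ 3 * th (k * x) * (1 - th (k * x) ^ 2) - 4 * k ^ 4 * x * (1 - th (k * x) ^ 2) ^ 2
      + 8 * k ^ 4 * x * th (k * x) ^ 2 * (1 - th (k * x) ^ 2)
      + 4 * β * k ^ 3 * th (k * x) * (1 - th (k * x) ^ 2)
      + 4 * k ^ 3 * S * th (k * x) * (1 - th (k * x) ^ 2) * x ^ 2
      - 8 * k ^ 2 * S * x * (1 - th (k * x) ^ 2) - 4 * k * S * th (k * x) - 6 * S ^ 2 * x) x := by
  have ht : HasDerivAt (fun x => th (k * x)) ((1 - th (k * x) ^ 2) * k) x := by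
    have hk : HasDerivAt (fun x : ℝ => k * x) k x := by simpa using (hasDerivAt_id x).const_mul k
    exact (th_deriv (k * x)).comp x hk
  have hid := hasDerivAt_id x
  have h0 := hasDerivAt_const x A
  have hs := (ht.pow 2).const_sub 1
  have h2 := (ht.pow 2).const_mul (2 * k ^ 2)
  have h3 := ((hid.const_mul (4 * k ^ 3)).mul ht).mul hs
  have h4 := hs.const_mul (2 * β * k ^ 2)
  have h5 := (((hs.const_mul k).mul (hasDerivAt_pow 2 x)).add ((hid.const_mul 2).mul ht)).const_mul (2 * k * S)
  have h6 := (hasDerivAt_pow 2 x).const_mul (3 * S ^ 2)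
  refine (((((h0.sub h2).sub h3).sub h4).sub h5).sub h6).congr_deriv ?_
  simp only [id, Pi.mul_apply, Pi.pow_apply]
  push_cast
  ring

theorem R2_neg {k β S x δ M : ℝ} (hk : 0 < k) (hβ : 0 < β) (hS : 0 < S) (hδ : 0 < δ) (hx : δ ≤ x)
    (hSM : 1 ≤ S * M ^ 2)
    (hz : (1 - th (k * x) ^ 2) * (8 * M ^ 2 / δ ^ 2 * (k * x) ^ 3 + (4 * β * M ^ 2 / δ ^ 2 + 4) * (k * x) ^ 2)
      < 4 * th (k * x)) :
    -8 * k ^ 3 * th (k * x) * (1 - th (k * x) ^ 2) - 4 * k ^ 4 * x * (1 - th (k * x) ^ 2) ^ 2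
      + 8 * k ^ 4 * x * th (k * x) ^ 2 * (1 - th (k * x) ^ 2)
      + 4 * β * k ^ 3 * th (k * x) * (1 - th (k * x) ^ 2)
      + 4 * k ^ 3 * S * th (k * x) * (1 - th (k * x) ^ 2) * x ^ 2
      - 8 * k ^ 2 * S * x * (1 - th (k * x) ^ 2) - 4 * k * S * th (k * x) - 6 * S ^ 2 * x < 0 := by
  have hx0 : 0 < x := by linarith
  have hs := th_s_pos (k * x)
  have ht := th_nonneg (x := k * x) (by positivity)
  have ht1 : th (k * x) ≤ 1 := by nlinarith
  generalize th (k * x) = t at *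
  have ht2 : t ^ 2 ≤ 1 := by linarith
  set s := 1 - t ^ 2 with hsd
  clear_value s
  have a1 : 8 * k ^ 4 * x * t ^ 2 * s ≤ 8 * k ^ 4 * x * 1 * s := by gcongr
  have a2 : 4 * β * k ^ 3 * t * s ≤ 4 * β * k ^ 3 * 1 * s := by gcongr
  have a3 : 4 * k ^ 3 * S * t * s * x ^ 2 ≤ 4 * k ^ 3 * S * 1 * s * x ^ 2 := by gcongr
  have b1 : 0 ≤ k ^ 3 * t * s := by positivity
  have b2 : 0 ≤ k ^ 4 * x * s ^ 2 := by positivity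
  have b3 : 0 ≤ k ^ 2 * S * x * s := by positivity
  have b4 : 0 ≤ S ^ 2 * x := by positivity
  have hr : 1 ≤ S * M ^ 2 * (x ^ 2 / δ ^ 2) := by
    have : 1 ≤ x ^ 2 / δ ^ 2 := by
      rw [one_le_div (by positivity)]; gcongr
    nlinarith
  have c1 : k ^ 4 * x * s * 1 ≤ k ^ 4 * x * s * (S * M ^ 2 * (x ^ 2 / δ ^ 2)) := by gcongr
  have c2 : β * k ^ 3 * s * 1 ≤ β * k ^ 3 * s * (S * M ^ 2 * (x ^ 2 / δ ^ 2)) := by gcongr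
  have hz2 := mul_lt_mul_of_pos_left hz (mul_pos hk hS)
  have e : k * S * (s * (8 * M ^ 2 / δ ^ 2 * (k * x) ^ 3 + (4 * β * M ^ 2 / δ ^ 2 + 4) * (k * x) ^ 2))
    = 8 * (k ^ 4 * x * s * (S * M ^ 2 * (x ^ 2 / δ ^ 2))) + 4 * (β * k ^ 3 * s * (S * M ^ 2 * (x ^ 2 / δ ^ 2)))
      + 4 * k ^ 3 * S * 1 * s * x ^ 2 := by
    ring
  rw [e] at hz2
  linarith

theorem pv_pos {N k w q x : ℝ} (γ : ℝ) (hN : 0 < N) (hw : 0 < w) (hq : 0 < q) (hx : 0 < x) : 0 < pv N k w q γ x := by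
  have := JJ_pos γ hq (show 0 < w * x ^ 2 by positivity)
  have := Real.cosh_pos (k * x)
  unfold pv; positivity

theorem pv_h5 {N k w q γ σ δ M z0 : ℝ} (hN : 0 < N) (hk : 0 < k) (hw : 0 < w) (hq : 0 < q) (hγ : -1 / 2 < γ)
    (hσ : 0 < σ) (hσM : σ ≤ M) (hδ : 0 < δ)
    (hz0 : ∀ z, z0 ≤ z → (1 - th z ^ 2) * (8 * M ^ 2 / δ ^ 2 * z ^ 3
      + (4 * (γ + 1 / 2) * M ^ 2 / δ ^ 2 + 4) * z ^ 2) < 4 * th z)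
    (hkδ : z0 ≤ k * δ) (a b c e g : ℝ) (ha : δ < a) (hab : a < b)
    (hbc : b < c) (hce : c < e) (heg : e < g)
    (h1 : nn σ a < pv N k w q γ a) (h2 : pv N k w q γ b < nn σ b) (h3 : nn σ c < pv N k w q γ c)
    (h4 : pv N k w q γ e < nn σ e) (h5 : nn σ g < pv N k w q γ g) : False := by
  have hl : ∀ x, 0 < x → Real.log (pv N k w q γ x) =
      Real.log N + (Real.log (Real.cosh (k * x)) + Real.log (JJ q γ (w * x ^ 2))) := by
    intro x hx
    have j := JJ_pos γ hq (show 0 < w * x ^ 2 by positivity)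
    have cc := Real.cosh_pos (k * x)
    rw [pv, Real.log_mul hN.ne' (by positivity), Real.log_mul cc.ne' j.ne']
  have hd : ∀ x, 0 < x → HasDerivAt
      (fun x => (Real.log N + (Real.log (Real.cosh (k * x)) + Real.log (JJ q γ (w * x ^ 2)))) - Real.log (nn σ x))
      (k * th (k * x) + uu w q γ x + x / σ ^ 2) x := by
    intro x hx
    have hkx : HasDerivAt (fun x : ℝ => k * x) k x := by simpa using (hasDerivAt_id x).const_mul k
    have hc := (hkx.cosh).log (Real.cosh_pos (k * x)).ne'
    have := ((hc.add (logJJ_deriv γ hw hq hx)).const_add (Real.log N)).sub (log_nn_deriv hσ x)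
    refine this.congr_deriv ?_
    unfold th
    ring
  have up : ∀ x, 0 < x → nn σ x < pv N k w q γ x →
      0 < (Real.log N + (Real.log (Real.cosh (k * x)) + Real.log (JJ q γ (w * x ^ 2)))) - Real.log (nn σ x) := by
    intro x hx h
    rw [← hl x hx, sub_pos]; exact Real.log_lt_log (nn_pos hσ x) h
  have dn : ∀ x, 0 < x → pv N k w q γ x < nn σ x →
      (Real.log N + (Real.log (Real.cosh (k * x)) + Real.log (JJ q γ (w * x ^ 2)))) - Real.log (nn σ x) < 0 := by
    intro x hx h
    rw [← hl x hx, sub_neg]; exact Real.log_lt_log (pv_pos γ hN hw hq hx) h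
  obtain ⟨x1, x2, x3, x4, k1, k2, k3, k4, y1, y2, y3, y4⟩ := pat_deriv hd (hδ.trans ha) hab hbc hce heg
    (up a (by linarith) h1) (dn b (by linarith) h2) (up c (by linarith) h3) (dn e (by linarith) h4)
    (up g (by linarith) h5)
  have hy : ∀ x, 0 < x → HasDerivAt (fun x => k * th (k * x) + uu w q γ x + x / σ ^ 2)
      (k ^ 2 * (1 - th (k * x) ^ 2) + (4 * w * q + (1 + 2 * γ) * uu w q γ x / x - uu w q γ x ^ 2) + 1 / σ ^ 2) x := by
    intro x hx
    have hkx : HasDerivAt (fun x : ℝ => k * x) k x := by simpa using (hasDerivAt_id x).const_mul k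
    have ht := ((th_deriv (k * x)).comp x hkx).const_mul k
    refine ((ht.add (uu_deriv γ hw hq hx)).add ((hasDerivAt_id x).div_const (σ ^ 2))).congr_deriv ?_
    ring
  obtain ⟨z1, u1, u2, u3, u4⟩ := zero_up k2 (fun x hx _ => hy x (by linarith)) y1 y2
  obtain ⟨z2, v1, v2, v3, v4⟩ := zero_dn k3 (fun x hx _ => hy x (by linarith)) y2 y3
  obtain ⟨z3, w1, w2, w3, w4⟩ := zero_up k4 (fun x hx _ => hy x (by linarith)) y3 y4
  have id : ∀ z, 0 < z → k * th (k * z) + uu w q γ z + z / σ ^ 2 = 0 →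
      z * (k ^ 2 * (1 - th (k * z) ^ 2) + (4 * w * q + (1 + 2 * γ) * uu w q γ z / z - uu w q γ z ^ 2) + 1 / σ ^ 2) =
      (k ^ 2 + 4 * w * q - (2 * γ) * (σ ^ 2)⁻¹) * z - 2 * k ^ 2 * z * th (k * z) ^ 2
        - 2 * (γ + 1 / 2) * k * th (k * z) - 2 * k * (σ ^ 2)⁻¹ * z ^ 2 * th (k * z) - (σ ^ 2)⁻¹ ^ 2 * z ^ 3 := by
    intro z hz h
    have hu : uu w q γ z = -(k * th (k * z)) - z * (σ ^ 2)⁻¹ := by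
      rw [div_eq_mul_inv] at h; linarith
    rw [hu]
    field_simp
    ring
  have q1 : 0 < z1 := by linarith
  have q2 : 0 < z2 := by linarith
  have q3 : 0 < z3 := by linarith
  have t1 := mul_nonneg q1.le u4
  have t2 := mul_nonpos_of_nonneg_of_nonpos q2.le v4
  have t3 := mul_nonneg q3.le w4
  rw [id _ q1 u3] at t1
  rw [id _ q2 v3] at t2
  rw [id _ q3 w3] at t3
  refine no_conc (a := z1) (b := z2) (c := z3) (by linarith) (by linarith)
    (fun x _ => RR_deriv k (k ^ 2 + 4 * w * q - (2 * γ) * (σ ^ 2)⁻¹) (γ + 1 / 2) (σ ^ 2)⁻¹ x)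
    (fun x _ => RR_deriv2 k (k ^ 2 + 4 * w * q - (2 * γ) * (σ ^ 2)⁻¹) (γ + 1 / 2) (σ ^ 2)⁻¹ x) ?_ t1 t2 t3
  intro x hx
  refine R2_neg (δ := δ) (M := M) hk (by linarith) (by positivity) hδ (by linarith) ?_ ?_
  · rw [inv_mul_eq_div, one_le_div (by positivity)]; gcongr
  · apply hz0
    have : k * δ ≤ k * x := by
      have : δ ≤ x := by linarith
      gcongr
    linarith

open MeasureTheory Filter Topology

theorem gauss_lin {b : ℝ} (hb : 0 < b) (τ : ℝ) :
    Integrable (fun x : ℝ => Real.exp (τ * x - b * x ^ 2)) ∧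
    ∫ x : ℝ, Real.exp (τ * x - b * x ^ 2) = Real.sqrt (Real.pi / b) * Real.exp (τ ^ 2 / (4 * b)) := by
  have e : (fun x : ℝ => Real.exp (τ * x - b * x ^ 2)) =
      fun x => Real.exp (τ ^ 2 / (4 * b)) * Real.exp (-b * (x - τ / (2 * b)) ^ 2) := by
    ext x
    rw [← Real.exp_add]
    congr 1
    field_simp
    ring
  rw [e]
  constructor
  · exact ((integrable_exp_neg_mul_sq hb).comp_sub_right (τ / (2 * b))).const_mul _
  · rw [integral_const_mul, integral_sub_right_eq_self (fun x => Real.exp (-b * x ^ 2)), integral_gaussian]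
    ring

theorem jj_meas2 (τ q γ w : ℝ) : Measurable (fun z : ℝ × ℝ => Real.exp (τ * z.1) * jj q γ (w * z.1 ^ 2) z.2) := by
  unfold jj
  fun_prop

theorem JJ_mgf {w q γ τ : ℝ} (hw : 0 < w) (hγ : -1 < γ) (hτ : 0 < q - τ ^ 2 / (4 * w)) :
    Integrable (fun x => Real.exp (τ * x) * JJ q γ (w * x ^ 2)) ∧
    ∫ x, Real.exp (τ * x) * JJ q γ (w * x ^ 2) =
      Real.sqrt (Real.pi / w) * ((1 / (q - τ ^ 2 / (4 * w))) ^ (γ + 3 / 2) * Real.Gamma (γ + 3 / 2)) := by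
  set r := q - τ ^ 2 / (4 * w) with hr
  set F : ℝ → ℝ → ℝ := fun x l => Real.exp (τ * x) * jj q γ (w * x ^ 2) l with hF
  have inner : ∀ l, 0 < l → Integrable (fun x => F x l) ∧
      ∫ x, F x l = Real.sqrt (Real.pi / w) * (l ^ (γ + 3 / 2 - 1) * Real.exp (-(r * l))) := by
    intro l hl
    have g := gauss_lin (b := w / l) (by positivity) τ
    have e : (fun x => F x l) = fun x => (l ^ γ * Real.exp (-(q * l))) * Real.exp (τ * x - w / l * x ^ 2) := by
      ext x
      simp only [hF, jj]
      rw [show -(w * x ^ 2 / l) - q * l = -(w / l * x ^ 2) + -(q * l) by ring, Real.exp_add,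
        sub_eq_add_neg, Real.exp_add]
      ring
    rw [e]
    refine ⟨g.1.const_mul _, ?_⟩
    rw [integral_const_mul, g.2, show Real.pi / (w / l) = Real.pi / w * l by field_simp,
      Real.sqrt_mul (by positivity), Real.sqrt_eq_rpow l, show γ + 3 / 2 - 1 = γ + 1 / 2 by ring,
      Real.rpow_add hl, show -(r * l) = -(q * l) + τ ^ 2 / (4 * (w / l)) by rw [hr]; field_simp; ring,
      Real.exp_add]
    ring
  have hpos : ∀ l, 0 < l → ∀ x, 0 ≤ F x l := fun l hl x => mul_nonneg (Real.exp_pos _).le (jj_pos hl).le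
  have gi := (gam_int (α := γ + 3 / 2) (r := r) (by linarith) hτ).const_mul (Real.sqrt (Real.pi / w))
  have hFint : Integrable (Function.uncurry F) (volume.prod (volume.restrict (Set.Ioi 0))) := by
    refine (integrable_prod_iff' (f := Function.uncurry F) (jj_meas2 τ q γ w).aestronglyMeasurable).2 ?_
    constructor
    · exact (ae_restrict_iff' measurableSet_Ioi).2 (ae_of_all _ fun l hl => (inner l hl).1)
    · refine gi.congr ((ae_restrict_iff' measurableSet_Ioi).2 (ae_of_all _ fun l hl => ?_))
      beta_reduce
      rw [← (inner l hl).2]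
      congr 1; ext x
      exact (Real.norm_of_nonneg (hpos l hl x)).symm
  have e1 : (fun x => Real.exp (τ * x) * JJ q γ (w * x ^ 2)) = fun x => ∫ l in Set.Ioi 0, F x l := by
    ext x
    simp only [hF, JJ]
    rw [integral_const_mul]
  rw [e1]
  refine ⟨hFint.integral_prod_left, ?_⟩
  rw [integral_integral_swap hFint, setIntegral_congr_fun measurableSet_Ioi (fun l hl => (inner l hl).2),
    integral_const_mul, Real.integral_rpow_mul_exp_neg_mul_Ioi (by linarith) hτ]

theorem pv_mgf {N k w q γ θ : ℝ} (hw : 0 < w) (hγ : -1 < γ) (h1 : 0 < q - (θ + k) ^ 2 / (4 * w))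
    (h2 : 0 < q - (θ - k) ^ 2 / (4 * w)) :
    Integrable (fun x => Real.exp (θ * x) * pv N k w q γ x) ∧
    ∫ x, Real.exp (θ * x) * pv N k w q γ x =
      N / 2 * Real.sqrt (Real.pi / w) * Real.Gamma (γ + 3 / 2) *
        ((1 / (q - (θ + k) ^ 2 / (4 * w))) ^ (γ + 3 / 2) + (1 / (q - (θ - k) ^ 2 / (4 * w))) ^ (γ + 3 / 2)) := by
  obtain ⟨i1, e1⟩ := JJ_mgf hw hγ h1
  obtain ⟨i2, e2⟩ := JJ_mgf hw hγ h2
  have e : (fun x => Real.exp (θ * x) * pv N k w q γ x) = fun x => N / 2 *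
      (Real.exp ((θ + k) * x) * JJ q γ (w * x ^ 2) + Real.exp ((θ - k) * x) * JJ q γ (w * x ^ 2)) := by
    ext x
    rw [pv, Real.cosh_eq, show (θ + k) * x = θ * x + k * x by ring, show (θ - k) * x = θ * x + -(k * x) by ring,
      Real.exp_add, Real.exp_add]
    ring
  rw [e]
  refine ⟨(i1.add i2).const_mul _, ?_⟩
  rw [integral_const_mul, integral_add i1 i2, e1, e2]
  ring

theorem pv_even (N k w q γ x : ℝ) : pv N k w q γ (-x) = pv N k w q γ x := by simp [pv]

theorem JJ_nonneg (q γ A : ℝ) : 0 ≤ JJ q γ A :=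
  setIntegral_nonneg measurableSet_Ioi fun l hl => (jj_pos hl).le

theorem pv_cont {N k w q γ : ℝ} (hw : 0 < w) (hq : 0 < q) (hγ : -1 < γ) : Continuous (pv N k w q γ) := by
  have h : Continuous fun x : ℝ => JJ q γ (w * x ^ 2) := by
    unfold JJ
    refine continuous_of_dominated (bound := fun l => l ^ γ * Real.exp (-(q * l)))
      (fun x => jj_meas q γ _) (fun x => ?_) (gam_int' hγ hq) ?_
    · refine (ae_restrict_iff' measurableSet_Ioi).2 (ae_of_all _ fun l hl => ?_)
      have hl : (0 : ℝ) < l := hl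
      rw [Real.norm_of_nonneg (jj_pos hl).le, jj]
      have : 0 ≤ w * x ^ 2 / l := by positivity
      have h3 := Real.rpow_pos_of_pos hl γ
      gcongr
      linarith
    · refine ae_of_all _ fun l => ?_
      unfold jj
      fun_prop
  have h2 : Continuous fun x : ℝ => Real.cosh (k * x) := Real.continuous_cosh.comp (by fun_prop)
  unfold pv
  fun_prop

theorem pv_tail {N k w q γ : ℝ} (hN : 0 < N) (hw : 0 < w) (hq : 0 < q) (hγ : -1 < γ) (x : ℝ) (hx : 1 ≤ x) :
    N / 2 * Real.exp (-(w + 2 * q) * x) ≤ pv N k w q γ x := by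
  have hx0 : 0 < x := by linarith
  have hJ : 1 / 2 * Real.exp (-(w + 2 * q) * x) ≤ JJ q γ (w * x ^ 2) := by
    have hA : 0 < w * x ^ 2 := by positivity
    have hi := jj_int γ hq hA
    have hsub : Set.Ioc x (2 * x) ⊆ Set.Ioi 0 := fun l hl => hx0.trans hl.1
    have h1 : ∫ l in Set.Ioc x (2 * x), jj q γ (w * x ^ 2) l ≤ JJ q γ (w * x ^ 2) :=
      setIntegral_mono_set hi ((ae_restrict_iff' measurableSet_Ioi).2 (ae_of_all _ fun l hl => (jj_pos hl).le))
        (HasSubset.Subset.eventuallyLE hsub)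
    have h2 : ∫ l in Set.Ioc x (2 * x), (1 / (2 * x)) * Real.exp (-(w + 2 * q) * x) ≤
        ∫ l in Set.Ioc x (2 * x), jj q γ (w * x ^ 2) l := by
      refine setIntegral_mono_on (integrableOn_const (by simp)) (hi.mono_set hsub) measurableSet_Ioc ?_
      intro l hl
      have hl0 : 0 < l := hx0.trans hl.1
      unfold jj
      have a1 : 1 / (2 * x) ≤ l ^ γ := by
        calc 1 / (2 * x) ≤ 1 / l := by gcongr; exact hl.2
          _ = l ^ (-1 : ℝ) := by rw [Real.rpow_neg_one, one_div]
          _ ≤ l ^ γ := Real.rpow_le_rpow_of_exponent_le (by linarith [hl.1]) hγ.le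
      have a2 : w * x ^ 2 / l ≤ w * x := by
        rw [div_le_iff₀ hl0]
        have := hl.1.le
        have : w * x * x ≤ w * x * l := by gcongr
        nlinarith
      have a3 : q * l ≤ q * (2 * x) := by
        have := hl.2; gcongr
      have h3 := Real.rpow_pos_of_pos hl0 γ
      gcongr
      linarith
    have h3 : ∫ l in Set.Ioc x (2 * x), (1 / (2 * x)) * Real.exp (-(w + 2 * q) * x) =
        1 / 2 * Real.exp (-(w + 2 * q) * x) := by
      rw [setIntegral_const, Real.volume_real_Ioc_of_le (by linarith), smul_eq_mul]
      field_simp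
      ring
    linarith
  rw [pv]
  have hc := Real.one_le_cosh (k * x)
  have he := Real.exp_pos (-(w + 2 * q) * x)
  calc N / 2 * Real.exp (-(w + 2 * q) * x) = N * (1 * (1 / 2 * Real.exp (-(w + 2 * q) * x))) := by ring
    _ ≤ _ := by gcongr

open MeasureTheory Filter Topology

noncomputable def tau (mu x l : ℝ) : ℝ := mu * Real.sqrt l - x / Real.sqrt l
noncomputable def tau' (mu x l : ℝ) : ℝ := mu / (2 * Real.sqrt l) + x / (2 * l * Real.sqrt l)

theorem tau_deriv {mu x l : ℝ} (hl : 0 < l) : HasDerivAt (tau mu x) (tau' mu x l) l := by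
  have h := Real.hasDerivAt_sqrt hl.ne'
  have hs := Real.sqrt_pos.2 hl
  have h2 := (h.const_mul mu).sub ((h.inv hs.ne').const_mul x)
  refine (h2.congr_of_eventuallyEq (Eventually.of_forall fun l => ?_)).congr_deriv ?_
  · simp [tau, div_eq_mul_inv]
  · unfold tau'
    have e := Real.sq_sqrt hl.le
    rw [e]
    field_simp
    ring

theorem tau_int {mu x v : ℝ} (hmu : 0 < mu) (hv : 0 < v) (hx : 0 ≤ x) :
    IntegrableOn (fun l => tau' mu x l * Real.exp (-(tau mu x l) ^ 2 / (2 * v ^ 2))) (Set.Ioi 0) ∧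
    ∫ l in Set.Ioi 0, tau' mu x l * Real.exp (-(tau mu x l) ^ 2 / (2 * v ^ 2)) ≤ Real.sqrt (2 * Real.pi) * v := by
  have hinj : Set.InjOn (tau mu x) (Set.Ioi 0) := by
    have : StrictMonoOn (tau mu x) (Set.Ioi 0) := by
      intro l hl l' hl' hll
      have hl : (0 : ℝ) < l := hl
      have hs := Real.sqrt_pos.2 hl
      have h1 := Real.sqrt_lt_sqrt hl.le hll
      unfold tau
      have h2 : mu * Real.sqrt l < mu * Real.sqrt l' := by gcongr
      have h3 : x / Real.sqrt l' ≤ x / Real.sqrt l := by gcongr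
      linarith
    exact this.injOn
  have hd : ∀ l ∈ Set.Ioi (0 : ℝ), HasDerivWithinAt (tau mu x) (tau' mu x l) (Set.Ioi 0) l :=
    fun l hl => (tau_deriv hl).hasDerivWithinAt
  have hpos : ∀ l ∈ Set.Ioi (0 : ℝ), 0 ≤ tau' mu x l := by
    intro l hl
    have hl : (0 : ℝ) < l := hl
    unfold tau'; positivity
  have hb : (0 : ℝ) < 1 / (2 * v ^ 2) := by positivity
  have gi := integrable_exp_neg_mul_sq hb
  have e : (fun t : ℝ => Real.exp (-t ^ 2 / (2 * v ^ 2))) = fun t => Real.exp (-(1 / (2 * v ^ 2)) * t ^ 2) := by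
    ext t; congr 1; ring
  have gi' : Integrable (fun t : ℝ => Real.exp (-t ^ 2 / (2 * v ^ 2))) := by rw [e]; exact gi
  have hg : ∫ t : ℝ, Real.exp (-t ^ 2 / (2 * v ^ 2)) = Real.sqrt (2 * Real.pi) * v := by
    rw [e, integral_gaussian, show Real.pi / (1 / (2 * v ^ 2)) = 2 * Real.pi * v ^ 2 by field_simp,
      Real.sqrt_mul (by positivity), Real.sqrt_sq hv.le]
  have ii := (integrableOn_image_iff_integrableOn_abs_deriv_smul measurableSet_Ioi hd hinj
    (fun t : ℝ => Real.exp (-t ^ 2 / (2 * v ^ 2)))).1 gi'.integrableOn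
  have eq := integral_image_eq_integral_abs_deriv_smul measurableSet_Ioi hd hinj
    (fun t : ℝ => Real.exp (-t ^ 2 / (2 * v ^ 2)))
  have ec : Set.EqOn (fun l => |tau' mu x l| • Real.exp (-(tau mu x l) ^ 2 / (2 * v ^ 2)))
      (fun l => tau' mu x l * Real.exp (-(tau mu x l) ^ 2 / (2 * v ^ 2))) (Set.Ioi 0) := by
    intro l hl
    simp only [smul_eq_mul, abs_of_nonneg (hpos l hl)]
  refine ⟨ii.congr_fun ec measurableSet_Ioi, ?_⟩
  rw [← setIntegral_congr_fun measurableSet_Ioi ec, ← eq, ← hg]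
  exact setIntegral_le_integral gi' (ae_of_all _ fun t => (Real.exp_pos _).le)

theorem pv_bound {N lam mu v β L x : ℝ} (hN : 0 < N) (hlam : 0 < lam) (hmu : 0 < mu) (hv : 0 < v) (hβ : 0 < β)
    (hL : 0 < L) (hx : 0 ≤ x) (hxL : x ≤ mu * L / 2) :
    pv N (mu / v ^ 2) (1 / (2 * v ^ 2)) (mu ^ 2 / (2 * v ^ 2) + v ^ 2 / 8 + lam) (β - 1 / 2) x ≤
      N * (L ^ β * (2 / mu) * (Real.sqrt (2 * Real.pi) * v) + Real.exp (-(mu ^ 2 * L / (8 * v ^ 2))) *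
        ∫ l in Set.Ioi 0, l ^ (β - 1 / 2) * Real.exp (-(lam * l))) := by
  obtain ⟨ti, tb⟩ := tau_int hmu hv hx
  set q := mu ^ 2 / (2 * v ^ 2) + v ^ 2 / 8 + lam with hqd
  have hq : 0 < q := by positivity
  have gi := gam_int' (s := β - 1 / 2) (q := lam) (by linarith) hlam
  have ji := jj_int0 (q := q) (γ := β - 1 / 2) (A := 1 / (2 * v ^ 2) * x ^ 2) hq (by linarith) (by positivity)
  have i1 := ti.const_mul (L ^ β * (2 / mu))
  have i2 := gi.const_mul (Real.exp (-(mu ^ 2 * L / (8 * v ^ 2))))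
  have hLb := Real.rpow_pos_of_pos hL β
  have main : ∫ l in Set.Ioi 0, Real.cosh (mu / v ^ 2 * x) * jj q (β - 1 / 2) (1 / (2 * v ^ 2) * x ^ 2) l ≤
      ∫ l in Set.Ioi 0, (L ^ β * (2 / mu) * (tau' mu x l * Real.exp (-(tau mu x l) ^ 2 / (2 * v ^ 2))) +
        Real.exp (-(mu ^ 2 * L / (8 * v ^ 2))) * (l ^ (β - 1 / 2) * Real.exp (-(lam * l)))) := by
    refine setIntegral_mono_on (ji.const_mul _) (i1.add i2) measurableSet_Ioi ?_
    intro l hl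
    have hl : (0 : ℝ) < l := hl
    have hs := Real.sqrt_pos.2 hl
    have hss := Real.sq_sqrt hl.le
    have hlg := Real.rpow_pos_of_pos hl (β - 1 / 2)
    have hlb := Real.rpow_pos_of_pos hl β
    have hsq : (tau mu x l) ^ 2 = (mu * l - x) ^ 2 / l := by
      unfold tau
      rw [eq_div_iff hl.ne']
      nth_rw 3 [← hss]
      field_simp
      rw [hss]
    have hch : Real.cosh (mu / v ^ 2 * x) ≤ Real.exp (mu / v ^ 2 * x) := by
      rw [Real.cosh_eq]
      have : Real.exp (-(mu / v ^ 2 * x)) ≤ Real.exp (mu / v ^ 2 * x) := by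
        apply Real.exp_le_exp.2
        have : 0 ≤ mu / v ^ 2 * x := by positivity
        linarith
      linarith
    have e1 : Real.exp (mu / v ^ 2 * x) * jj q (β - 1 / 2) (1 / (2 * v ^ 2) * x ^ 2) l =
        l ^ (β - 1 / 2) * Real.exp (-(tau mu x l) ^ 2 / (2 * v ^ 2) - (v ^ 2 / 8 + lam) * l) := by
      rw [jj, hsq, mul_left_comm, ← Real.exp_add]
      congr 2
      rw [hqd]
      field_simp
      ring
    have e2 : Real.cosh (mu / v ^ 2 * x) * jj q (β - 1 / 2) (1 / (2 * v ^ 2) * x ^ 2) l ≤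
        l ^ (β - 1 / 2) * (Real.exp (-(tau mu x l) ^ 2 / (2 * v ^ 2)) * Real.exp (-(lam * l))) := by
      refine (mul_le_mul_of_nonneg_right hch (jj_pos hl).le).trans ?_
      rw [e1, ← Real.exp_add]
      gcongr
      have : 0 ≤ v ^ 2 / 8 * l := by positivity
      linarith
    refine e2.trans ?_
    have ht' : mu / (2 * Real.sqrt l) ≤ tau' mu x l := by
      unfold tau'
      have : 0 ≤ x / (2 * l * Real.sqrt l) := by positivity
      linarith
    have ht0 : 0 ≤ tau' mu x l := le_trans (by positivity) ht'
    have hE := Real.exp_pos (-(tau mu x l) ^ 2 / (2 * v ^ 2))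
    rcases le_total l L with h | h
    · have k1 : l ^ (β - 1 / 2) ≤ L ^ β * (2 / mu) * tau' mu x l := by
        have : l ^ (β - 1 / 2) = l ^ β * (2 / mu) * (mu / (2 * Real.sqrt l)) := by
          rw [Real.rpow_sub hl, ← Real.sqrt_eq_rpow]; field_simp
        rw [this]
        have : l ^ β ≤ L ^ β := Real.rpow_le_rpow hl.le h hβ.le
        gcongr
      have k2 : Real.exp (-(lam * l)) ≤ 1 := Real.exp_le_one_iff.2 (by
        have : 0 ≤ lam * l := by positivity
        linarith)
      have k3 : l ^ (β - 1 / 2) * (Real.exp (-(tau mu x l) ^ 2 / (2 * v ^ 2)) * Real.exp (-(lam * l))) ≤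
          (L ^ β * (2 / mu) * tau' mu x l) * (Real.exp (-(tau mu x l) ^ 2 / (2 * v ^ 2)) * 1) := by
        gcongr
      have k4 : 0 ≤ Real.exp (-(mu ^ 2 * L / (8 * v ^ 2))) * (l ^ (β - 1 / 2) * Real.exp (-(lam * l))) := by
        positivity
      linarith
    · have k1 : Real.exp (-(tau mu x l) ^ 2 / (2 * v ^ 2)) ≤ Real.exp (-(mu ^ 2 * L / (8 * v ^ 2))) := by
        apply Real.exp_le_exp.2
        rw [neg_div, neg_le_neg_iff, hsq, div_div, div_le_div_iff₀ (by positivity) (by positivity)]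
        have h1 : mu * l / 2 ≤ mu * l - x := by nlinarith
        have h2 : (mu * l / 2) ^ 2 ≤ (mu * l - x) ^ 2 := by
          have : 0 ≤ mu * l / 2 := by positivity
          gcongr
        have h3 : mu ^ 2 * L * (l * (2 * v ^ 2)) ≤ mu ^ 2 * l * (l * (2 * v ^ 2)) := by gcongr
        nlinarith [mul_le_mul_of_nonneg_right h2 (show 0 ≤ 8 * v ^ 2 by positivity)]
      have k3 : l ^ (β - 1 / 2) * (Real.exp (-(tau mu x l) ^ 2 / (2 * v ^ 2)) * Real.exp (-(lam * l))) ≤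
          l ^ (β - 1 / 2) * (Real.exp (-(mu ^ 2 * L / (8 * v ^ 2))) * Real.exp (-(lam * l))) := by
        gcongr
      have k4 : 0 ≤ L ^ β * (2 / mu) * (tau' mu x l * Real.exp (-(tau mu x l) ^ 2 / (2 * v ^ 2))) := by
        positivity
      linarith
  rw [integral_const_mul, integral_add i1 i2, integral_const_mul, integral_const_mul] at main
  rw [pv, JJ]
  refine mul_le_mul_of_nonneg_left (main.trans ?_) hN.le
  gcongr

theorem pv_small {N' lam mu β ε δm : ℝ} (hN : 0 < N') (hlam : 0 < lam) (hmu : 0 < mu) (hβ : 0 < β)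
    (hε : 0 < ε) (hδm : 0 < δm) : ∃ δ > 0, δ ≤ δm ∧ ∃ v0 > 0, ∀ v, 0 < v → v < v0 → ∀ x, |x| ≤ δ →
    pv (N' / v) (mu / v ^ 2) (1 / (2 * v ^ 2)) (mu ^ 2 / (2 * v ^ 2) + v ^ 2 / 8 + lam) (β - 1 / 2) x < ε := by
  set G := ∫ l in Set.Ioi (0 : ℝ), l ^ (β - 1 / 2) * Real.exp (-(lam * l)) with hG
  have hG0 : 0 ≤ G := setIntegral_nonneg measurableSet_Ioi fun l hl => by
    have hl : (0 : ℝ) < l := hl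
    positivity
  set D := N' * (2 / mu) * Real.sqrt (2 * Real.pi) with hD
  have hDp : 0 < D := by
    have : 0 < Real.sqrt (2 * Real.pi) := by positivity
    positivity
  have ht : Tendsto (fun L : ℝ => D * L ^ β) (𝓝[>] 0) (𝓝 0) := by
    have hc : ContinuousAt (fun L : ℝ => D * L ^ β) 0 :=
      continuousAt_const.mul (Real.continuousAt_rpow_const _ _ (Or.inr hβ.le))
    have := hc.tendsto
    rw [Real.zero_rpow hβ.ne', mul_zero] at this
    exact this.mono_left nhdsWithin_le_nhds
  have hlt := ht.eventually_lt_const (show (0 : ℝ) < ε / 2 by positivity)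
  have hIoo : Set.Ioo (0 : ℝ) (2 * δm / mu) ∈ 𝓝[>] (0 : ℝ) := Ioo_mem_nhdsGT (by positivity)
  obtain ⟨L, hL1, hL2⟩ := (hlt.and hIoo).exists
  have hL : 0 < L := hL2.1
  refine ⟨mu * L / 2, by positivity, ?_, ε / 2 * (mu ^ 2 * L) / (8 * N' * (G + 1)), by positivity, ?_⟩
  · have := hL2.2
    rw [lt_div_iff₀ hmu] at this
    linarith
  intro v hv hv0 x hx
  have habs : pv (N' / v) (mu / v ^ 2) (1 / (2 * v ^ 2)) (mu ^ 2 / (2 * v ^ 2) + v ^ 2 / 8 + lam) (β - 1 / 2) x =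
    pv (N' / v) (mu / v ^ 2) (1 / (2 * v ^ 2)) (mu ^ 2 / (2 * v ^ 2) + v ^ 2 / 8 + lam) (β - 1 / 2) |x| := by
    rcases abs_choice x with h | h
    · rw [h]
    · rw [h, pv_even]
  rw [habs]
  refine (pv_bound (L := L) (by positivity) hlam hmu hv hβ hL (abs_nonneg x) hx).trans_lt ?_
  rw [← hG]
  have he : Real.exp (-(mu ^ 2 * L / (8 * v ^ 2))) ≤ 8 * v ^ 2 / (mu ^ 2 * L) := by
    rw [Real.exp_neg, inv_le_comm₀ (Real.exp_pos _) (by positivity), inv_div]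
    have := Real.add_one_le_exp (mu ^ 2 * L / (8 * v ^ 2))
    linarith
  have h1 : N' / v * (L ^ β * (2 / mu) * (Real.sqrt (2 * Real.pi) * v)) = D * L ^ β := by
    rw [hD]; field_simp
  have h2 : N' / v * (Real.exp (-(mu ^ 2 * L / (8 * v ^ 2))) * G) ≤
      N' / v * (8 * v ^ 2 / (mu ^ 2 * L) * (G + 1)) := by
    gcongr
    linarith
  have h3 : N' / v * (8 * v ^ 2 / (mu ^ 2 * L) * (G + 1)) < ε / 2 := by
    rw [lt_div_iff₀ (by positivity)] at hv0
    have : N' / v * (8 * v ^ 2 / (mu ^ 2 * L) * (G + 1)) = v * (8 * N' * (G + 1)) / (mu ^ 2 * L) := by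
      field_simp
    rw [this, div_lt_iff₀ (by positivity)]
    exact hv0
  rw [mul_add, h1]
  linarith

open MeasureTheory Filter Topology

noncomputable def Nv (c lam mu T : ℝ) : ℝ :=
  2 * (lam ^ (c * T) * (mixA c lam mu T * mixB c lam mu T)) /
    ((mixA c lam mu T + mixB c lam mu T) * Real.Gamma (c * T) * Real.sqrt (2 * Real.pi))

noncomputable def pvm (c lam mu T v x : ℝ) : ℝ :=
  pv (Nv c lam mu T / v) (mu / v ^ 2) (1 / (2 * v ^ 2)) (mu ^ 2 / (2 * v ^ 2) + v ^ 2 / 8 + lam)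
    (c * T - 1 - 1 / 2) x

theorem Nv_pos {c lam mu T : ℝ} (hlam : 0 < lam) (hmu : 0 < mu) (h : mu < 2 * lam) (hcT : 1 < c * T) :
    0 < Nv c lam mu T := by
  have ha := mixA_pos (c := c) (T := T) hlam hmu
  have hb := mixB_pos (c := c) (T := T) hlam h
  have := Real.Gamma_pos_of_pos (show 0 < c * T by linarith)
  have : 0 < Real.sqrt (2 * Real.pi) := by positivity
  unfold Nv; positivity

theorem lm_rpow {c lam mu T : ℝ} (hlam : 0 < lam) (h : mu < 2 * lam) :
    (lam - mu / 2) ^ (c * T) = lam ^ (c * T) * mixB c lam mu T := by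
  rw [mixB, ← Real.mul_rpow hlam.le (one_sub_pos hlam h).le]
  congr 1; field_simp

theorem lp_rpow {c lam mu T : ℝ} (hlam : 0 < lam) (hmu : 0 < mu) :
    (lam + mu / 2) ^ (c * T) = lam ^ (c * T) * mixA c lam mu T := by
  rw [mixA, ← Real.mul_rpow hlam.le (by positivity)]
  congr 1; field_simp

theorem vg_gen (lam s α v x C l : ℝ) (hv : 0 < v) (hl : 0 < l) :
    (Real.sqrt (2 * Real.pi * v ^ 2 * l))⁻¹ *
      Real.exp (-(x - (s - v ^ 2 / 2) * l) ^ 2 / (2 * v ^ 2 * l)) * C * l ^ (α - 1) *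
      Real.exp (-(lam + s / 2) * l) =
    ((Real.sqrt (2 * Real.pi) * v)⁻¹ * C * (Real.exp (-x / 2) * Real.exp (s / v ^ 2 * x))) *
      jj (s ^ 2 / (2 * v ^ 2) + v ^ 2 / 8 + lam) (α - 1 - 1 / 2) (1 / (2 * v ^ 2) * x ^ 2) l := by
  have hs := Real.sqrt_pos.2 hl
  have h2 : 0 < Real.sqrt (2 * Real.pi) := by positivity
  rw [jj, Real.sqrt_mul (by positivity), Real.sqrt_mul (by positivity), Real.sqrt_sq hv.le,
    Real.rpow_sub hl (α - 1) (1 / 2), ← Real.sqrt_eq_rpow]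
  have e : Real.exp (-(x - (s - v ^ 2 / 2) * l) ^ 2 / (2 * v ^ 2 * l)) * Real.exp (-(lam + s / 2) * l) =
      Real.exp (-x / 2) * Real.exp (s / v ^ 2 * x) *
      Real.exp (-(1 / (2 * v ^ 2) * x ^ 2 / l) - (s ^ 2 / (2 * v ^ 2) + v ^ 2 / 8 + lam) * l) := by
    rw [← Real.exp_add, ← Real.exp_add, ← Real.exp_add]
    congr 1
    field_simp
    ring
  calc _ = (Real.sqrt (2 * Real.pi) * v * Real.sqrt l)⁻¹ * C * l ^ (α - 1) *
        (Real.exp (-(x - (s - v ^ 2 / 2) * l) ^ 2 / (2 * v ^ 2 * l)) * Real.exp (-(lam + s / 2) * l)) := by ring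
    _ = _ := by
      rw [e, mul_inv]
      ring

theorem vgPlus_eq {c lam mu T v : ℝ} (hv : 0 < v) (x : ℝ) :
    vgPlus c lam mu T v x = ((Real.sqrt (2 * Real.pi) * v)⁻¹ * ((lam + mu / 2) ^ (c * T) / Real.Gamma (c * T)) *
      (Real.exp (-x / 2) * Real.exp (mu / v ^ 2 * x))) *
      JJ (mu ^ 2 / (2 * v ^ 2) + v ^ 2 / 8 + lam) (c * T - 1 - 1 / 2) (1 / (2 * v ^ 2) * x ^ 2) := by
  rw [vgPlus, JJ, ← integral_const_mul]
  refine setIntegral_congr_fun measurableSet_Ioi fun l hl => ?_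
  exact vg_gen lam mu (c * T) v x _ l hv hl

theorem vgMinus_eq {c lam mu T v : ℝ} (hv : 0 < v) (x : ℝ) :
    vgMinus c lam mu T v x = ((Real.sqrt (2 * Real.pi) * v)⁻¹ * ((lam - mu / 2) ^ (c * T) / Real.Gamma (c * T)) *
      (Real.exp (-x / 2) * Real.exp (-(mu / v ^ 2 * x)))) *
      JJ (mu ^ 2 / (2 * v ^ 2) + v ^ 2 / 8 + lam) (c * T - 1 - 1 / 2) (1 / (2 * v ^ 2) * x ^ 2) := by
  rw [vgMinus, JJ, ← integral_const_mul]
  refine setIntegral_congr_fun measurableSet_Ioi fun l hl => ?_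
  have := vg_gen lam (-mu) (c * T) v x ((lam - mu / 2) ^ (c * T) / Real.Gamma (c * T)) l hv hl
  rw [show lam + -mu / 2 = lam - mu / 2 by ring, neg_sq, show -mu / v ^ 2 * x = -(mu / v ^ 2 * x) by ring] at this
  exact this

theorem vgMix_eq {c lam mu T v : ℝ} (hlam : 0 < lam) (hmu : 0 < mu) (h : mu < 2 * lam) (hcT : 1 < c * T)
    (hv : 0 < v) (x : ℝ) : vgMix c lam mu T v x = Real.exp (-x / 2) * pvm c lam mu T v x := by
  have ha := mixA_pos (c := c) (T := T) hlam hmu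
  have hb := mixB_pos (c := c) (T := T) hlam h
  have hG := Real.Gamma_pos_of_pos (show 0 < c * T by linarith)
  have hp : 0 < Real.sqrt (2 * Real.pi) := by positivity
  rw [vgMix, vgPlus_eq hv, vgMinus_eq hv, lm_rpow hlam h, lp_rpow hlam hmu, pvm, pv, Real.cosh_eq, Nv]
  field_simp
  ring

theorem pvm_mgf {c lam mu T v θ : ℝ} (hcT : 1 < c * T)
    (hv : 0 < v) (h1 : 0 < lam + v ^ 2 / 8 - v ^ 2 * θ ^ 2 / 2 - θ * mu)
    (h2 : 0 < lam + v ^ 2 / 8 - v ^ 2 * θ ^ 2 / 2 + θ * mu) :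
    Integrable (fun x => Real.exp (θ * x) * pvm c lam mu T v x) ∧
    ∫ x, Real.exp (θ * x) * pvm c lam mu T v x =
      Nv c lam mu T / 2 * Real.sqrt (2 * Real.pi) * Real.Gamma (c * T) *
        ((1 / (lam + v ^ 2 / 8 - v ^ 2 * θ ^ 2 / 2 - θ * mu)) ^ (c * T) +
        (1 / (lam + v ^ 2 / 8 - v ^ 2 * θ ^ 2 / 2 + θ * mu)) ^ (c * T)) := by
  have e1 : (mu ^ 2 / (2 * v ^ 2) + v ^ 2 / 8 + lam) - (θ + mu / v ^ 2) ^ 2 / (4 * (1 / (2 * v ^ 2))) =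
      lam + v ^ 2 / 8 - v ^ 2 * θ ^ 2 / 2 - θ * mu := by
    field_simp; ring
  have e2 : (mu ^ 2 / (2 * v ^ 2) + v ^ 2 / 8 + lam) - (θ - mu / v ^ 2) ^ 2 / (4 * (1 / (2 * v ^ 2))) =
      lam + v ^ 2 / 8 - v ^ 2 * θ ^ 2 / 2 + θ * mu := by
    field_simp; ring
  obtain ⟨i, e⟩ := pv_mgf (N := Nv c lam mu T / v) (k := mu / v ^ 2) (w := 1 / (2 * v ^ 2))
    (q := mu ^ 2 / (2 * v ^ 2) + v ^ 2 / 8 + lam) (γ := c * T - 1 - 1 / 2) (θ := θ) (by positivity) (by linarith)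
    (by rw [e1]; exact h1) (by rw [e2]; exact h2)
  refine ⟨i, ?_⟩
  unfold pvm
  rw [e, e1, e2, show c * T - 1 - 1 / 2 + 3 / 2 = c * T by ring,
    show Real.pi / (1 / (2 * v ^ 2)) = 2 * Real.pi * v ^ 2 by field_simp,
    Real.sqrt_mul (by positivity), Real.sqrt_sq hv.le]
  field_simp

theorem pvm_sym {c lam mu T v : ℝ} (hlam : 0 < lam) (hmu : 0 < mu) (h : mu < 2 * lam) (hcT : 1 < c * T)
    (hv : 0 < v) : SymDens (pvm c lam mu T v) := by
  have ha := mixA_pos (c := c) (T := T) hlam hmu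
  have hb := mixB_pos (c := c) (T := T) hlam h
  have hG := Real.Gamma_pos_of_pos (show 0 < c * T by linarith)
  have hp : 0 < Real.sqrt (2 * Real.pi) := by positivity
  have hN := Nv_pos hlam hmu h hcT
  have hl := Real.rpow_pos_of_pos hlam (c * T)
  have e1 : lam + v ^ 2 / 8 - v ^ 2 * (1 / 2) ^ 2 / 2 - 1 / 2 * mu = lam - mu / 2 := by ring
  have e2 : lam + v ^ 2 / 8 - v ^ 2 * (1 / 2) ^ 2 / 2 + 1 / 2 * mu = lam + mu / 2 := by ring
  obtain ⟨i, e⟩ := pvm_mgf (c := c) (lam := lam) (mu := mu) (T := T) (θ := 1 / 2) hcT hv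
    (by rw [e1]; linarith) (by rw [e2]; linarith)
  rw [e1, e2] at e
  refine ⟨pv_cont (by positivity) (by positivity) (by linarith), fun x => pv_even _ _ _ _ _ x, ?_, ?_, ?_⟩
  · intro x
    have := JJ_nonneg (mu ^ 2 / (2 * v ^ 2) + v ^ 2 / 8 + lam) (c * T - 1 - 1 / 2) (1 / (2 * v ^ 2) * x ^ 2)
    have := Real.cosh_pos (mu / v ^ 2 * x)
    unfold pvm pv; positivity
  · refine i.congr (ae_of_all _ fun x => ?_)
    beta_reduce; congr 2; ring
  · have e3 : ∫ x, Real.exp (x / 2) * pvm c lam mu T v x = ∫ x, Real.exp (1 / 2 * x) * pvm c lam mu T v x := by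
      congr 1; ext x; congr 2; ring
    rw [e3, e, Real.div_rpow (by norm_num) (by linarith), Real.div_rpow (by norm_num) (by linarith),
      Real.one_rpow, lm_rpow hlam h, lp_rpow hlam hmu, Nv]
    generalize lam ^ (c * T) = k at *
    field_simp

theorem pvm_I0 {c lam mu T v : ℝ} (hlam : 0 < lam) (hmu : 0 < mu) (h : mu < 2 * lam) (hcT : 1 < c * T)
    (hv : 0 < v) : ∫ x, pvm c lam mu T v x = 2 * (mixA c lam mu T * mixB c lam mu T) /
      (mixA c lam mu T + mixB c lam mu T) * (lam / (lam + v ^ 2 / 8)) ^ (c * T) := by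
  have ha := mixA_pos (c := c) (T := T) hlam hmu
  have hb := mixB_pos (c := c) (T := T) hlam h
  have hG := Real.Gamma_pos_of_pos (show 0 < c * T by linarith)
  have hp : 0 < Real.sqrt (2 * Real.pi) := by positivity
  have e := (pvm_mgf (c := c) (lam := lam) (mu := mu) (T := T) (θ := 0) hcT hv
    (by ring_nf; positivity) (by ring_nf; positivity)).2
  simp only [zero_mul, Real.exp_zero, one_mul] at e
  rw [e, show lam + v ^ 2 / 8 - v ^ 2 * 0 ^ 2 / 2 - 0 = lam + v ^ 2 / 8 by ring,
    show lam + v ^ 2 / 8 - v ^ 2 * 0 ^ 2 / 2 + 0 = lam + v ^ 2 / 8 by ring,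
    Real.div_rpow hlam.le (by positivity), Real.div_rpow (by norm_num) (by positivity), Real.one_rpow, Nv]
  have hx := Real.rpow_pos_of_pos (show 0 < lam + v ^ 2 / 8 by positivity) (c * T)
  generalize (lam + v ^ 2 / 8) ^ (c * T) = z at *
  generalize lam ^ (c * T) = k at *
  field_simp
  ring

open MeasureTheory Filter Topology

/-- **Main theorem: W-shaped implied volatility in the variance-gamma mixture model.**
For `cT > 1` there is `v_◦ > 0` such that for all `v ∈ [0, v_◦)` any implied volatility
function of the model is W-shaped: for some `σ_* > 0` the function `K ↦ σ_v(K) − σ_*`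
exhibits the sign pattern `+,−,+,−,+` and has no more than four sign changes. -/
theorem vg_mixture_W_shaped
    (c lam mu T : ℝ)
    (hc : 0 < c) (hlam : 0 < lam) (hmu : 0 < mu) (hT : 0 < T)
    (hmu2lam : mu < 2 * lam) (hcT : 1 < c * T) :
    ∃ vcirc > (0 : ℝ), ∀ v : ℝ, 0 ≤ v → v < vcirc →
      ∀ σv : ℝ → ℝ, ContinuousOn σv (Set.Ioi 0) → (∀ K, 0 < K → 0 < σv K) →
        (∀ K, 0 < K → callPrice (modelDensity c lam mu T v) K = callBS K (σv K)) →
        ∃ σstar > (0 : ℝ),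
          (∃ K0 K1 K2 K3 K4 : ℝ, 0 < K0 ∧ K0 < K1 ∧ K1 < K2 ∧ K2 < K3 ∧ K3 < K4 ∧
            σstar < σv K0 ∧ σv K1 < σstar ∧ σstar < σv K2 ∧ σv K3 < σstar ∧
            σstar < σv K4) ∧
          ¬∃ x : Fin 6 → ℝ, StrictMono x ∧ 0 < x 0 ∧
            ∀ i : Fin 5, (σv (x i.castSucc) - σstar) * (σv (x i.succ) - σstar) < 0 := by
  have hN0 := N0_pos (c := c) (T := T) hlam hmu hmu2lam hcT
  have hNv := Nv_pos (c := c) (T := T) hlam hmu hmu2lam hcT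
  have ha := mixA_pos (c := c) (T := T) hlam hmu
  have hb := mixB_pos (c := c) (T := T) hlam hmu2lam
  set i2 := 2 * (mixA c lam mu T * mixB c lam mu T) / (mixA c lam mu T + mixB c lam mu T) with hi2
  have hi2p : 0 < i2 := by positivity
  set i1 := i2 * (lam / (lam + 1 / 8)) ^ (c * T) with hi1
  have hi1p : 0 < i1 := by positivity
  have hrle : (lam / (lam + 1 / 8)) ^ (c * T) ≤ 1 := by
    apply Real.rpow_le_one (by positivity) _ (by linarith)
    rw [div_le_one (by positivity)]; linarith
  have hi12 : i1 ≤ i2 := by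
    rw [hi1]; nlinarith
  obtain ⟨m, hm, M', hvol'⟩ := vol_bounds hi1p (i2_lt hlam hmu hmu2lam hcT)
  set M := max M' 1 with hM
  have hMp : 0 < M := lt_of_lt_of_le one_pos (le_max_right _ _)
  have hvol : ∀ p f : ℝ → ℝ, SymDens p → (∀ x, f x = Real.exp (-x / 2) * p x) → i1 ≤ ∫ x, p x →
      ∫ x, p x ≤ i2 → ∀ σ, 0 < σ → callBS 1 σ = callPrice f 1 → m ≤ σ ∧ σ ≤ M := by
    intro p f h1 h2 h3 h4 σ h5 h6
    have := hvol' p f h1 h2 h3 h4 σ h5 h6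
    exact ⟨this.1, this.2.trans (le_max_left _ _)⟩
  have hsp : 0 < Real.sqrt (2 * Real.pi) := by positivity
  set ε := (Real.sqrt (2 * Real.pi))⁻¹ * M⁻¹ * Real.exp (-2 - M ^ 2 / 8) with hε
  have hεp : 0 < ε := by positivity
  obtain ⟨δ, hδ, hδm, v0, hv0, hsmall⟩ := pv_small (N' := Nv c lam mu T) (β := c * T - 1) hNv hlam hmu
    (by linarith) hεp hm
  obtain ⟨z0, hz0p, hz0⟩ := z0_exists (8 * M ^ 2 / δ ^ 2) (4 * (c * T - 1 - 1 / 2 + 1 / 2) * M ^ 2 / δ ^ 2 + 4)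
  refine ⟨min (min 1 v0) (mu * δ / z0), by positivity, ?_⟩
  intro v hv hvc σv _ hpos hcall
  rw [lt_min_iff, lt_min_iff] at hvc
  obtain ⟨⟨hv1, hvv0⟩, hvz⟩ := hvc
  rcases hv.eq_or_lt with rfl | hvp
  · have hf : ∀ x, modelDensity c lam mu T 0 x =
        Real.exp (-x / 2) * p0 (N0 c lam mu T) (lam / mu) (c * T - 1) x := by
      intro x
      rw [modelDensity, if_pos rfl]
      exact dg_eq hlam hmu hmu2lam hcT x
    have hsym := dg_sym (c := c) (T := T) hlam hmu hmu2lam hcT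
    have hI := dg_I0 (c := c) (T := T) hlam hmu hmu2lam hcT
    obtain ⟨δ', hδ', hs⟩ := p0_small (N := N0 c lam mu T) (κ := lam / mu) (β := c * T - 1) (by linarith) hεp
    refine core hsym hf hm (hvol _ _ hsym hf (by rw [hI]; exact hi12) (by rw [hI]))
      (δ := min δ' m) (by positivity) ?_ ?_ hN0 (p0_tail (κ := lam / mu) hN0 (by linarith)) σv hpos hcall
    · intro σ h1 h2 x hx
      exact (hs x (hx.trans (min_le_left _ _))).trans_le (nn_lower hm h1 h2 hx (min_le_right _ _))
    · intro σ h1 h2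
      exact p0_h5 hN0 (by linarith)
  · have hf : ∀ x, modelDensity c lam mu T v x = Real.exp (-x / 2) * pvm c lam mu T v x := by
      intro x
      rw [modelDensity, if_neg hvp.ne']
      exact vgMix_eq hlam hmu hmu2lam hcT hvp x
    have hsym := pvm_sym (c := c) (T := T) hlam hmu hmu2lam hcT hvp
    have hI := pvm_I0 (c := c) (T := T) hlam hmu hmu2lam hcT hvp
    have hlow : i1 ≤ ∫ x, pvm c lam mu T v x := by
      rw [hI, hi1]
      have : lam / (lam + 1 / 8) ≤ lam / (lam + v ^ 2 / 8) := by
        have : v ^ 2 ≤ 1 := by nlinarith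
        gcongr
      gcongr
    have hup : ∫ x, pvm c lam mu T v x ≤ i2 := by
      rw [hI]
      have : (lam / (lam + v ^ 2 / 8)) ^ (c * T) ≤ 1 := by
        apply Real.rpow_le_one (by positivity) _ (by linarith)
        rw [div_le_one (by positivity)]; nlinarith [sq_nonneg v]
      nlinarith
    have hneg : ∀ σ, m / 2 ≤ σ → σ ≤ M → ∀ x, |x| ≤ δ → pvm c lam mu T v x < nn σ x := by
      intro σ h1 h2 x hx
      exact (hsmall v hvp hvv0 x hx).trans_le (nn_lower hm h1 h2 hx hδm)
    have hkδ : z0 ≤ mu / v ^ 2 * δ := by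
      rw [lt_div_iff₀ hz0p] at hvz
      rw [div_mul_eq_mul_div, le_div_iff₀ (by positivity)]
      have : v ^ 2 ≤ v := by nlinarith
      nlinarith
    refine core hsym hf hm (hvol _ _ hsym hf hlow hup) hδ hneg ?_
      (c0 := Nv c lam mu T / v / 2) (by positivity)
      (fun x hx => pv_tail (by positivity) (by positivity) (by positivity) (by linarith) x hx) σv hpos hcall
    intro σ h1 h2 a b c' e g h0 hab hbc hce heg k1 k2 k3 k4 k5
    have hδa : δ < a := by
      by_contra hh
      push Not at hh
      have := hneg σ h1 h2 a (by rw [abs_of_pos h0]; exact hh)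
      linarith
    exact pv_h5 (by positivity) (by positivity) (by positivity) (by positivity) (by linarith) (by linarith) h2 hδ
      hz0 hkδ a b c' e g hδa hab hbc hce heg k1 k2 k3 k4 k5
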